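/- arXiv:1601.08248 — 2 statements merged into one kernel-verified Lean document; each statement's English description precedes it below -/
import Mathlib

section
/- (Abstract evolution estimate.) If F ∈ W_+^1(ℍ) and Ξ := (ξ,χ) ∈ W_+^2(𝕄₁×𝕄₂), then the problem: find U ∈ TD(ℍ) with U̇ = A_*U + Gξ + F and BU = χ, has a unique solution U ∈ C_+^1(ℍ) ∩ C_+(𝕍), and for all t ≥ 0: ‖U(t)‖_ℍ ≤ C_lift(∫₀^t ‖Ξ(τ)‖_{𝕄₁×𝕄₂} dτ + 2∫₀^t ‖Ξ̇(τ)‖_{𝕄₁×𝕄₂} dτ) + ∫₀^t ‖F(τ)‖_ℍ dτ, and ‖U̇(t)‖_ℍ ≤ C_lift(∫₀^t ‖Ξ̇(τ)‖_{𝕄₁×𝕄₂} dτ + 2∫₀^t ‖Ξ̈(τ)‖_{𝕄₁×𝕄₂} dτ) + ∫₀^t ‖Ḟ(τ)‖_ℍ dτ. -/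
open scoped RealInnerProductSpace

noncomputable section

/-- A function of time is causal when it vanishes for `t ≤ 0`. -/
def Causal {X : Type*} [AddCommGroup X] (f : ℝ → X) : Prop := ∀ t ≤ 0, f t = 0

/-- The Sobolev class `W_+^k(X)` of causal functions of class `C^{k-1}` whose `k`-th
distributional derivative is integrable. -/
def WP {X : Type*} [NormedAddCommGroup X] [NormedSpace ℝ X] (k : ℕ) (f : ℝ → X) : Prop :=
  ContDiff ℝ (k - 1 : ℕ) f ∧ Causal f ∧
    MeasureTheory.Integrable (iteratedDeriv k f) ∧
    ∀ s t : ℝ, iteratedDeriv (k - 1) f t - iteratedDeriv (k - 1) f s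
      = ∫ τ in s..t, iteratedDeriv k f τ

/-- The accumulated quantity `H_k(f,t|X) = ∑_{j=0}^k ∫_0^t ‖f^{(j)}(τ)‖_X dτ`. -/
noncomputable def Hfun {X : Type*} [NormedAddCommGroup X] [NormedSpace ℝ X]
    (k : ℕ) (f : ℝ → X) (t : ℝ) : ℝ :=
  ∑ j ∈ Finset.range (k + 1), ∫ τ in (0:ℝ)..t, ‖iteratedDeriv j f τ‖

/-- The antidifferentiation operator `∂⁻¹ f (t) = ∫_0^t f(τ) dτ` (for causal `f`). -/
noncomputable def aInt {X : Type*} [NormedAddCommGroup X] [NormedSpace ℝ X]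
    (f : ℝ → X) (t : ℝ) : X := ∫ τ in (0:ℝ)..t, f τ

/-- A (strong, causal) solution of the abstract evolution problem
$\dot U = A_⋆ U + Gξ + F$, $BU = χ$, where the Hilbert space $𝕍$ is embedded in $ℍ$
through $J$. -/
def SolvesACP
    {HH VV M1 M2 : Type*}
    [NormedAddCommGroup HH] [InnerProductSpace ℝ HH]
    [NormedAddCommGroup VV] [NormedSpace ℝ VV]
    [NormedAddCommGroup M1] [InnerProductSpace ℝ M1]
    [NormedAddCommGroup M2] [InnerProductSpace ℝ M2]
    (J : VV →L[ℝ] HH) (Astar : VV →L[ℝ] HH) (G : M1 →L[ℝ] HH) (B : VV →L[ℝ] M2)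
    (ξ : ℝ → M1) (χ : ℝ → M2) (F : ℝ → HH) (U : ℝ → VV) : Prop :=
  Causal U ∧ Continuous U ∧ (∀ t : ℝ, B (U t) = χ t) ∧
  ∀ t : ℝ, HasDerivAt (fun τ => J (U τ)) (Astar (U t) + G (ξ t) + F t) t

section aee

open MeasureTheory Filter Set Topology

/-- Approximation of locally integrable functions by smooth ones. -/
lemma aee_approx {H : Type*} [NormedAddCommGroup H] [NormedSpace ℝ H] (g : ℝ → H)
    (hg : ∀ t : ℝ, IntervalIntegrable g volume 0 t) :
    ∃ gk : ℕ → ℝ → H, (∀ k, ContDiff ℝ 1 (gk k)) ∧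
      ∀ (k : ℕ) (t : ℝ), 0 ≤ t → t ≤ k → ∫ τ in (0:ℝ)..t, ‖g τ - gk k τ‖ ≤ 1 / ((k:ℝ) + 1) := by
  have key : ∀ k : ℕ, ∃ h : ℝ → H, ContDiff ℝ 1 h ∧
      ∀ t : ℝ, 0 ≤ t → t ≤ k → ∫ τ in (0:ℝ)..t, ‖g τ - h τ‖ ≤ 1 / ((k:ℝ) + 1) := by
    intro k
    have hk : (0:ℝ) ≤ k := Nat.cast_nonneg k
    have h1 : Integrable g (volume.restrict (Ioc 0 (k:ℝ))) := by
      have := hg k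
      rwa [intervalIntegrable_iff_integrableOn_Ioc_of_le hk] at this
    obtain ⟨h, -, hc, he⟩ := (memLp_one_iff_integrable.2 h1).exist_eLpNorm_sub_le
      ENNReal.one_ne_top le_rfl (ε := 1 / ((k:ℝ) + 1)) (by positivity)
    refine ⟨h, hc.of_le (by exact_mod_cast le_top), fun t ht htk => ?_⟩
    have hcont : Continuous h := hc.continuous
    have hInt : Integrable (g - h) (volume.restrict (Ioc 0 (k:ℝ))) := by
      refine h1.sub ?_
      have := hcont.intervalIntegrable (μ := volume) 0 k
      rwa [intervalIntegrable_iff_integrableOn_Ioc_of_le hk] at this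
    rw [eLpNorm_one_eq_lintegral_enorm, ← ofReal_integral_norm_eq_lintegral_enorm hInt,
      ENNReal.ofReal_le_ofReal_iff (by positivity)] at he
    rw [intervalIntegral.integral_of_le ht]
    refine le_trans ?_ he
    refine integral_mono_measure ?_ ?_ hInt.norm
    · exact Measure.restrict_mono (Ioc_subset_Ioc_right htk) le_rfl
    · exact Eventually.of_forall fun _ => norm_nonneg _
  choose gk h1 h2 using key
  exact ⟨gk, h1, h2⟩

/-- Energy inequality. -/
lemma aee_energy {H : Type*} [NormedAddCommGroup H] [InnerProductSpace ℝ H]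
    (u u' : ℝ → H) (φ : ℝ → ℝ) (hφ : Continuous φ) (hφ0 : ∀ t, 0 ≤ φ t)
    (hu : ∀ t, 0 ≤ t → HasDerivAt u (u' t) t)
    (hin : ∀ t, 0 ≤ t → ⟪u' t, u t⟫ ≤ φ t * ‖u t‖) (t : ℝ) (ht : 0 ≤ t) :
    ‖u t‖ ≤ ‖u 0‖ + ∫ τ in (0:ℝ)..t, φ τ := by
  refine le_of_forall_pos_le_add fun η hη => ?_
  have hpos : ∀ s, 0 < ‖u s‖ ^ 2 + η ^ 2 := fun s => by positivity
  have hder : ∀ s, 0 ≤ s → HasDerivAt (fun s => Real.sqrt (‖u s‖ ^ 2 + η ^ 2)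
      - ∫ τ in (0:ℝ)..s, φ τ) (2 * ⟪u s, u' s⟫ / (2 * Real.sqrt (‖u s‖ ^ 2 + η ^ 2)) - φ s) s := by
    intro s hs
    refine HasDerivAt.sub ?_ ?_
    · exact (((hu s hs).norm_sq).add_const (η ^ 2)).sqrt (hpos s).ne'
    · exact intervalIntegral.integral_hasDerivAt_right (hφ.intervalIntegrable _ _)
        hφ.aestronglyMeasurable.stronglyMeasurableAtFilter hφ.continuousAt
  have hanti : AntitoneOn (fun s => Real.sqrt (‖u s‖ ^ 2 + η ^ 2)
      - ∫ τ in (0:ℝ)..s, φ τ) (Ici 0) := by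
    refine antitoneOn_of_hasDerivWithinAt_nonpos (convex_Ici 0)
      (fun s hs => (hder s hs).continuousAt.continuousWithinAt)
      (fun s hs => (hder s (interior_subset hs)).hasDerivWithinAt) ?_
    intro s hs
    have hs : 0 ≤ s := interior_subset hs
    have h1 := hin s hs
    rw [real_inner_comm] at h1
    have h2 : ‖u s‖ ≤ Real.sqrt (‖u s‖ ^ 2 + η ^ 2) :=
      Real.le_sqrt_of_sq_le (by nlinarith [sq_nonneg η])
    have h3 : 0 < Real.sqrt (‖u s‖ ^ 2 + η ^ 2) := Real.sqrt_pos.2 (hpos s)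
    rw [sub_nonpos, div_le_iff₀ (by positivity)]
    nlinarith [mul_le_mul_of_nonneg_left h2 (hφ0 s)]
  have h := hanti (mem_Ici.2 le_rfl) (mem_Ici.2 ht) ht
  simp only [intervalIntegral.integral_same, sub_zero] at h
  have h2 : ‖u t‖ ≤ Real.sqrt (‖u t‖ ^ 2 + η ^ 2) :=
      Real.le_sqrt_of_sq_le (by nlinarith [sq_nonneg η])
  have h4 : Real.sqrt (‖u 0‖ ^ 2 + η ^ 2) ≤ ‖u 0‖ + η := by
    rw [Real.sqrt_le_left (by positivity)]
    nlinarith [norm_nonneg (u 0)]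
  linarith

/-- The linear ODE with bounded operator. -/
lemma aee_ode {H : Type*} [NormedAddCommGroup H] [NormedSpace ℝ H] [CompleteSpace H]
    (T : H →L[ℝ] H) (h : ℝ → H) (hh : Continuous h) (x0 : H) :
    ∃ X : ℝ → H, X 0 = x0 ∧ ∀ t, HasDerivAt X (T (X t) + h t) t := by
  have hE : ∀ t : ℝ, HasDerivAt (fun u : ℝ => NormedSpace.exp (u • T))
      (T * NormedSpace.exp (t • T)) t := fun t => hasDerivAt_exp_smul_const' T t
  have hEc : Continuous (fun u : ℝ => NormedSpace.exp (u • T)) :=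
    continuous_iff_continuousAt.2 fun t => (hE t).continuousAt
  have hinv : ∀ t : ℝ, NormedSpace.exp (t • T) * NormedSpace.exp ((-t) • T) = 1 := by
    intro t
    let _ : NormedAlgebra ℚ (H →L[ℝ] H) := NormedAlgebra.restrictScalars ℚ ℝ _
    rw [← NormedSpace.exp_add_of_commute, ← add_smul]
    · simp
    · exact (Commute.refl T).smul_left _ |>.smul_right _
  have hk : Continuous fun s : ℝ => NormedSpace.exp ((-s) • T) (h s) := by
    have : Continuous fun s : ℝ => NormedSpace.exp ((-s) • T) := hEc.comp continuous_neg
    exact this.clm_apply hh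
  have hI : ∀ t : ℝ, HasDerivAt (fun t => x0 + ∫ s in (0:ℝ)..t, NormedSpace.exp ((-s) • T) (h s))
      (NormedSpace.exp ((-t) • T) (h t)) t := fun t =>
    (intervalIntegral.integral_hasDerivAt_right (hk.intervalIntegrable _ _)
        hk.aestronglyMeasurable.stronglyMeasurableAtFilter hk.continuousAt).const_add x0
  refine ⟨fun t => NormedSpace.exp (t • T)
    (x0 + ∫ s in (0:ℝ)..t, NormedSpace.exp ((-s) • T) (h s)), by simp, fun t => ?_⟩
  have := (hE t).clm_apply (hI t)
  convert this using 1
  rw [← mul_apply_eq_comp (NormedSpace.exp (t • T)), hinv]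
  simp

/-- Limits of locally uniformly Cauchy sequences on the half line. -/
lemma aee_limit {H : Type*} [NormedAddCommGroup H] [NormedSpace ℝ H] [CompleteSpace H]
    (Vn : ℕ → ℝ → H) (hc : ∀ n, Continuous (Vn n))
    (hcau : ∀ T, 0 ≤ T → ∀ η, 0 < η → ∃ N : ℕ, ∀ m ≥ N, ∀ n ≥ N, ∀ t, 0 ≤ t → t ≤ T →
      ‖Vn m t - Vn n t‖ ≤ η) :
    ∃ V : ℝ → H, Continuous V ∧ (∀ t, 0 ≤ t → Tendsto (fun n => Vn n t) atTop (𝓝 (V t))) ∧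
      ∀ t, 0 ≤ t → Tendsto (fun n => ∫ τ in (0:ℝ)..t, Vn n τ) atTop (𝓝 (∫ τ in (0:ℝ)..t, V τ)) := by
  have h1 : ∀ t : ℝ, ∃ x : H, Tendsto (fun n => Vn n (max t 0)) atTop (𝓝 x) := by
    intro t
    refine cauchySeq_tendsto_of_complete ?_
    rw [Metric.cauchySeq_iff]
    intro η hη
    obtain ⟨N, hN⟩ := hcau (max t 0) (le_max_right _ _) (η / 2) (by positivity)
    refine ⟨N, fun m hm n hn => ?_⟩
    rw [dist_eq_norm]
    exact (hN m hm n hn _ (le_max_right _ _) le_rfl).trans_lt (by linarith)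
  choose V hV using h1
  have hunif : ∀ T, 0 ≤ T → ∀ η, 0 < η → ∃ N : ℕ, ∀ n ≥ N, ∀ t, t ≤ T →
      ‖Vn n (max t 0) - V t‖ ≤ η := by
    intro T hT η hη
    obtain ⟨N, hN⟩ := hcau T hT η hη
    refine ⟨N, fun n hn t ht => ?_⟩
    have h2 : Tendsto (fun m => ‖Vn n (max t 0) - Vn m (max t 0)‖) atTop
        (𝓝 ‖Vn n (max t 0) - V t‖) := (tendsto_const_nhds.sub (hV t)).norm
    refine le_of_tendsto h2 ?_
    filter_upwards [eventually_ge_atTop N] with m hm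
    exact hN n hn m hm _ (le_max_right _ _) (max_le ht hT)
  have hVc : Continuous V := by
    have hloc : TendstoLocallyUniformly (fun n t => Vn n (max t 0)) V atTop := by
      rw [Metric.tendstoLocallyUniformly_iff]
      intro η hη x
      obtain ⟨N, hN⟩ := hunif (|x| + 1) (by positivity) (η / 2) (by positivity)
      refine ⟨Iio (|x| + 1), Iio_mem_nhds (by linarith [le_abs_self x]), ?_⟩
      filter_upwards [eventually_ge_atTop N] with n hn y hy
      rw [dist_comm, dist_eq_norm]
      exact (hN n hn y (le_of_lt hy)).trans_lt (by linarith)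
    refine hloc.continuous (Frequently.of_forall fun n => ?_)
    exact (hc n).comp (continuous_id.max continuous_const)
  refine ⟨V, hVc, fun t ht => by simpa [max_eq_left ht] using hV t, fun t ht => ?_⟩
  refine intervalIntegral.tendsto_integral_filter_of_dominated_convergence
    (fun s => ‖V s‖ + 1) ?_ ?_ ?_ ?_
  · exact Eventually.of_forall fun n => (hc n).aestronglyMeasurable
  · obtain ⟨N, hN⟩ := hunif t ht 1 one_pos
    filter_upwards [eventually_ge_atTop N] with n hn
    refine Eventually.of_forall fun s hs => ?_
    rw [uIoc_of_le ht] at hs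
    have h3 := hN n hn s hs.2
    rw [max_eq_left hs.1.le] at h3
    have h4 := norm_sub_norm_le (Vn n s) (V s)
    linarith
  · exact (hVc.norm.add continuous_const).intervalIntegrable _ _
  · refine Eventually.of_forall fun s hs => ?_
    rw [uIoc_of_le ht] at hs
    simpa [max_eq_left hs.1.le] using hV s

/-- The standing hypotheses on the operator. -/
structure AEEHyp {HH VV M2 : Type*}
    [NormedAddCommGroup HH] [InnerProductSpace ℝ HH]
    [NormedAddCommGroup VV] [NormedSpace ℝ VV]
    [NormedAddCommGroup M2] [InnerProductSpace ℝ M2]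
    (J A : VV →L[ℝ] HH) (B : VV →L[ℝ] M2) (c : ℝ) : Prop where
  inj : Function.Injective J
  cpos : 0 < c
  graph : ∀ v : VV, c * ‖v‖ ≤ ‖J v‖ + ‖A v‖
  diss : ∀ v : VV, B v = 0 → ⟪A v, J v⟫ = 0
  max : ∀ f : HH, ∃ v : VV, B v = 0 ∧ J v - A v = f

/-- Integrated (strong) solutions with datum `∫ g`. -/
def AEESol {HH VV M2 : Type*}
    [NormedAddCommGroup HH] [InnerProductSpace ℝ HH]
    [NormedAddCommGroup VV] [NormedSpace ℝ VV]
    [NormedAddCommGroup M2] [InnerProductSpace ℝ M2]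
    (J A : VV →L[ℝ] HH) (B : VV →L[ℝ] M2) (g V : ℝ → HH) : Prop :=
  Continuous V ∧ ∀ t, 0 ≤ t → ∃ w : VV, B w = 0 ∧ J w = ∫ τ in (0:ℝ)..t, V τ ∧
    A w = V t - ∫ τ in (0:ℝ)..t, g τ

set_option linter.unusedSectionVars false

section ops

variable {HH VV M2 : Type*}
    [NormedAddCommGroup HH] [InnerProductSpace ℝ HH] [CompleteSpace HH]
    [NormedAddCommGroup VV] [NormedSpace ℝ VV] [CompleteSpace VV]
    [NormedAddCommGroup M2] [InnerProductSpace ℝ M2]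
    {J A : VV →L[ℝ] HH} {B : VV →L[ℝ] M2} {c : ℝ}

lemma aee_closed (hyp : AEEHyp J A B c) (w : ℕ → VV) (hw : ∀ n, B (w n) = 0) (x y : HH)
    (hx : Tendsto (fun n => J (w n)) atTop (𝓝 x)) (hy : Tendsto (fun n => A (w n)) atTop (𝓝 y)) :
    ∃ v : VV, B v = 0 ∧ J v = x ∧ A v = y := by
  have hcau : CauchySeq w := by
    have hcx := Metric.cauchySeq_iff.1 hx.cauchySeq
    have hcy := Metric.cauchySeq_iff.1 hy.cauchySeq
    rw [Metric.cauchySeq_iff]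
    intro η hη
    have hc := hyp.cpos
    obtain ⟨N1, h1⟩ := hcx (c * η / 2) (by positivity)
    obtain ⟨N2, h2⟩ := hcy (c * η / 2) (by positivity)
    refine ⟨max N1 N2, fun m hm n hn => ?_⟩
    have h3 := h1 m (le_of_max_le_left hm) n (le_of_max_le_left hn)
    have h4 := h2 m (le_of_max_le_right hm) n (le_of_max_le_right hn)
    have h5 := hyp.graph (w m - w n)
    rw [dist_eq_norm] at h3 h4 ⊢
    rw [map_sub, map_sub] at h5
    have : c * ‖w m - w n‖ < c * η := by linarith
    exact lt_of_mul_lt_mul_left this hc.le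
  obtain ⟨v, hv⟩ := cauchySeq_tendsto_of_complete hcau
  refine ⟨v, ?_, ?_, ?_⟩
  · have h1 := (B.continuous.tendsto v).comp hv
    have h2 : (B ∘ w) = fun _ => 0 := funext hw
    rw [h2] at h1
    exact tendsto_nhds_unique h1 tendsto_const_nhds
  · exact tendsto_nhds_unique ((J.continuous.tendsto v).comp hv) hx
  · exact tendsto_nhds_unique ((A.continuous.tendsto v).comp hv) hy

lemma aee_R (hyp : AEEHyp J A B c) :
    ∃ R : HH →L[ℝ] VV, ∀ x, B (R x) = 0 ∧ J (R x) - A (R x) = x := by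
  have hnorm : ∀ v : VV, B v = 0 → ‖J v‖ ≤ ‖J v - A v‖ := by
    intro v hv
    have h1 : ⟪J v - A v, J v⟫ = ‖J v‖ ^ 2 := by
      rw [inner_sub_left, hyp.diss v hv, real_inner_self_eq_norm_sq, sub_zero]
    have h2 := real_inner_le_norm (J v - A v) (J v)
    rcases (norm_nonneg (J v)).eq_or_lt with h | h
    · rw [← h]; exact norm_nonneg _
    · refine le_of_mul_le_mul_right ?_ h
      nlinarith
  have huniq : ∀ v v' : VV, B v = 0 → B v' = 0 → J v - A v = J v' - A v' → v = v' := by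
    intro v v' hv hv' h
    have h1 := hnorm (v - v') (by rw [map_sub, hv, hv', sub_zero])
    have h2 : J (v - v') - A (v - v') = 0 := by
      rw [map_sub, map_sub, sub_sub_sub_comm, h, sub_self]
    rw [h2, norm_zero] at h1
    have h3 : J (v - v') = 0 := norm_le_zero_iff.1 h1
    rw [map_sub, sub_eq_zero] at h3
    exact hyp.inj h3
  choose r hr0 hr using hyp.max
  let R : HH →ₗ[ℝ] VV :=
    { toFun := r
      map_add' := fun x y => by
        refine huniq _ _ (hr0 _) (by rw [map_add, hr0, hr0, add_zero]) ?_
        rw [hr, map_add, map_add, add_sub_add_comm, hr, hr]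
      map_smul' := fun a x => by
        refine huniq _ _ (hr0 _) (by simp [hr0]) ?_
        simp only [RingHom.id_apply]
        rw [hr, map_smul, map_smul, ← smul_sub, hr] }
  refine ⟨R.mkContinuous (3 / c) fun x => ?_, fun x => ⟨hr0 x, hr x⟩⟩
  have h1 := hyp.graph (r x)
  have h2 := hnorm (r x) (hr0 x)
  rw [hr] at h2
  have h3 : ‖A (r x)‖ ≤ ‖J (r x)‖ + ‖x‖ := by
    have : A (r x) = J (r x) - x := by
      have h := hr x
      rw [sub_eq_iff_eq_add] at h
      rw [h, add_sub_cancel_left]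
    rw [this]; exact norm_sub_le _ _
  change ‖r x‖ ≤ 3 / c * ‖x‖
  rw [div_mul_eq_mul_div, le_div_iff₀ hyp.cpos]
  linarith

lemma aee_P (hyp : AEEHyp J A B c) (ε : ℝ) (hε : 0 < ε) :
    ∃ P : HH →L[ℝ] VV, ∀ x, B (P x) = 0 ∧ (1 + ε) • J (P x) - ε • A (P x) = x := by
  obtain ⟨R, hR⟩ := aee_R hyp
  let S : HH →L[ℝ] HH := J.comp R + ε • ContinuousLinearMap.id ℝ HH
  have hS : ∀ x, S x = J (R x) + ε • x := fun x => rfl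
  let b : HH →L[ℝ] HH →L[ℝ] ℝ := (innerSL ℝ).comp S
  have hb : ∀ x y, b x y = ⟪S x, y⟫ := fun x y => rfl
  have hco : IsCoercive b := by
    refine ⟨ε, hε, fun x => ?_⟩
    have h1 : ⟪J (R x), x⟫ = ‖J (R x)‖ ^ 2 := by
      have h2 : ⟪J (R x), x⟫ = ⟪J (R x), J (R x) - A (R x)⟫ := by rw [(hR x).2]
      rw [h2, inner_sub_right, real_inner_self_eq_norm_sq, real_inner_comm, hyp.diss _ (hR x).1,
        sub_zero]
    rw [hb, hS, inner_add_left, h1, real_inner_smul_left, real_inner_self_eq_norm_sq]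
    nlinarith [sq_nonneg ‖J (R x)‖]
  let e := hco.continuousLinearEquivOfBilin
  have he : ∀ x, e x = S x := by
    intro x
    refine ext_inner_right ℝ fun y => ?_
    rw [hco.continuousLinearEquivOfBilin_apply, hb]
  refine ⟨R.comp (e.symm : HH →L[ℝ] HH), fun x => ⟨(hR _).1, ?_⟩⟩
  have h1 : S (e.symm x) = x := by rw [← he]; simp
  rw [hS] at h1
  change (1 + ε) • J (R (e.symm x)) - ε • A (R (e.symm x)) = x
  rw [add_smul, one_smul, add_sub_assoc, ← smul_sub, (hR _).2, h1]

lemma aee_P_facts (hyp : AEEHyp J A B c) (ε : ℝ) (hε : 0 < ε) (P : HH →L[ℝ] VV)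
    (hP : ∀ x, B (P x) = 0 ∧ (1 + ε) • J (P x) - ε • A (P x) = x) (x : HH) :
    ‖J (P x)‖ ≤ ‖x‖ ∧ ⟪A (P x), x⟫ ≤ 0 := by
  obtain ⟨h0, h1⟩ := hP x
  have hd := hyp.diss _ h0
  constructor
  · have h2 : ⟪x, J (P x)⟫ = (1 + ε) * ‖J (P x)‖ ^ 2 := by
      have : ⟪x, J (P x)⟫ = ⟪(1 + ε) • J (P x) - ε • A (P x), J (P x)⟫ := by rw [h1]
      rw [this, inner_sub_left, real_inner_smul_left, real_inner_smul_left, hd,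
        real_inner_self_eq_norm_sq]
      ring
    have h3 := real_inner_le_norm x (J (P x))
    rcases (norm_nonneg (J (P x))).eq_or_lt with h | h
    · rw [← h]; exact norm_nonneg _
    · refine le_of_mul_le_mul_right ?_ h
      nlinarith [sq_nonneg ‖J (P x)‖]
  · have h2 : ⟪A (P x), x⟫ = - ε * ‖A (P x)‖ ^ 2 := by
      have : ⟪A (P x), x⟫ = ⟪A (P x), (1 + ε) • J (P x) - ε • A (P x)⟫ := by rw [h1]
      rw [this, inner_sub_right, real_inner_smul_right, real_inner_smul_right, hd,
        real_inner_self_eq_norm_sq]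
      ring
    rw [h2]
    nlinarith [sq_nonneg ‖A (P x)‖]

/-- The key inequality comparing two regularizations. -/
lemma aee_compare (hyp : AEEHyp J A B c) (ε δ : ℝ) (hε : 0 < ε) (hδ : 0 < δ) (P Q : HH →L[ℝ] VV)
    (hP : ∀ x, B (P x) = 0 ∧ (1 + ε) • J (P x) - ε • A (P x) = x)
    (hQ : ∀ x, B (Q x) = 0 ∧ (1 + δ) • J (Q x) - δ • A (Q x) = x) (x y : HH) (C : ℝ)
    (hx : ‖x‖ ≤ C) (hy : ‖y‖ ≤ C) (hax : ‖A (P x)‖ ≤ C) (hay : ‖A (Q y)‖ ≤ C) :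
    ⟪x - y, A (P x) - A (Q y)⟫ ≤ 4 * C ^ 2 * (ε + δ) := by
  have hp := (aee_P_facts hyp ε hε P hP x).1.trans hx
  have hq := (aee_P_facts hyp δ hδ Q hQ y).1.trans hy
  have hd := hyp.diss (P x - Q y) (by rw [map_sub, (hP x).1, (hQ y).1, sub_zero])
  rw [map_sub, map_sub] at hd
  have hxy : x - y = (J (P x) - J (Q y)) + (ε • (J (P x) - A (P x)) - δ • (J (Q y) - A (Q y))) := by
    have : x - y = ((1 + ε) • J (P x) - ε • A (P x)) - ((1 + δ) • J (Q y) - δ • A (Q y)) := by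
      rw [(hP x).2, (hQ y).2]
    rw [this]
    module
  have hC : 0 ≤ C := (norm_nonneg _).trans hx
  rw [hxy, inner_add_left, real_inner_comm, hd, zero_add]
  refine (real_inner_le_norm _ _).trans ?_
  have n1 : ‖ε • (J (P x) - A (P x)) - δ • (J (Q y) - A (Q y))‖ ≤ ε * (2 * C) + δ * (2 * C) := by
    refine (norm_sub_le _ _).trans ?_
    rw [norm_smul, norm_smul, Real.norm_of_nonneg hε.le, Real.norm_of_nonneg hδ.le]
    have a1 : ‖J (P x) - A (P x)‖ ≤ 2 * C := (norm_sub_le _ _).trans (by linarith)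
    have a2 : ‖J (Q y) - A (Q y)‖ ≤ 2 * C := (norm_sub_le _ _).trans (by linarith)
    gcongr
  have n2 : ‖A (P x) - A (Q y)‖ ≤ 2 * C := (norm_sub_le _ _).trans (by linarith)
  calc _ ≤ (ε * (2 * C) + δ * (2 * C)) * (2 * C) := by gcongr
    _ = _ := by ring

lemma aee_hasDerivAt_int {H : Type*} [NormedAddCommGroup H] [NormedSpace ℝ H] [CompleteSpace H]
    (X : ℝ → H) (hX : Continuous X) (t : ℝ) :
    HasDerivAt (fun t => ∫ τ in (0:ℝ)..t, X τ) (X t) t :=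
  intervalIntegral.integral_hasDerivAt_right (hX.intervalIntegrable _ _)
    hX.aestronglyMeasurable.stronglyMeasurableAtFilter hX.continuousAt

/-- Integrating the bounded ODE once. -/
lemma aee_int {H : Type*} [NormedAddCommGroup H] [NormedSpace ℝ H] [CompleteSpace H]
    (T : H →L[ℝ] H) (X g h : ℝ → H) (hX : ∀ t, HasDerivAt X (T (X t) + h t) t)
    (hg : ∀ t, HasDerivAt g (h t) t) (h0 : X 0 = g 0) (t : ℝ) :
    X t = T (∫ τ in (0:ℝ)..t, X τ) + g t := by
  have hXc : Continuous X := continuous_iff_continuousAt.2 fun t => (hX t).continuousAt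
  have hd : ∀ t, HasDerivAt (fun t => X t - (T (∫ τ in (0:ℝ)..t, X τ) + g t)) 0 t := by
    intro t
    have := (hX t).sub ((T.hasFDerivAt.comp_hasDerivAt t (aee_hasDerivAt_int X hXc t)).add (hg t))
    rw [sub_self] at this
    exact this
  have := is_const_of_deriv_eq_zero (fun t => (hd t).differentiableAt) (fun t => (hd t).deriv) t 0
  simp only [intervalIntegral.integral_same, map_zero, zero_add, h0, sub_self] at this
  exact sub_eq_zero.1 this

lemma aee_smooth (hyp : AEEHyp J A B c) (g : ℝ → HH) (hg : ContDiff ℝ 1 g) :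
    ∃ V, AEESol J A B g V ∧ ∀ t, 0 ≤ t → ‖V t‖ ≤ ∫ τ in (0:ℝ)..t, ‖g τ‖ := by
  have hgd : ∀ t, HasDerivAt g (deriv g t) t := fun t =>
    (hg.differentiable one_ne_zero t).hasDerivAt
  have hgc : Continuous g := hg.continuous
  have hhc : Continuous (deriv g) := hg.continuous_deriv le_rfl
  let e : ℕ → ℝ := fun n => 1 / ((n:ℝ) + 1)
  have he : ∀ n, 0 < e n := fun n => by positivity
  have he0 : Tendsto e atTop (𝓝 0) := tendsto_one_div_add_atTop_nhds_zero_nat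
  choose P hP using fun n => aee_P hyp (e n) (he n)
  let T : ℕ → HH →L[ℝ] HH := fun n => A.comp (P n)
  have hT : ∀ n x, T n x = A (P n x) := fun n x => rfl
  choose X hX0 hX using fun n => aee_ode (T n) (deriv g) hhc (g 0)
  have hXc : ∀ n, Continuous (X n) := fun n =>
    continuous_iff_continuousAt.2 fun t => (hX n t).continuousAt
  let V : ℕ → ℝ → HH := fun n t => ∫ τ in (0:ℝ)..t, X n τ
  have hXV : ∀ n t, X n t = T n (V n t) + g t := fun n t =>
    aee_int (T n) (X n) g (deriv g) (hX n) hgd (hX0 n) t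
  have hVd : ∀ n t, HasDerivAt (V n) (T n (V n t) + g t) t := fun n t => by
    rw [← hXV]; exact aee_hasDerivAt_int _ (hXc n) t
  have hV0 : ∀ n, V n 0 = 0 := fun n => by simp [V]
  have hVc : ∀ n, Continuous (V n) := fun n =>
    continuous_iff_continuousAt.2 fun t => (hVd n t).continuousAt
  have hVU : ∀ n t, V n t = T n (∫ τ in (0:ℝ)..t, V n τ) + ∫ τ in (0:ℝ)..t, g τ := fun n t =>
    aee_int (T n) (V n) (fun t => ∫ τ in (0:ℝ)..t, g τ) g (hVd n)
      (fun t => aee_hasDerivAt_int g hgc t) (by simp [hV0]) t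
  have hen : ∀ n (Y k : ℝ → HH), Continuous k → (∀ t, HasDerivAt Y (T n (Y t) + k t) t) →
      ∀ t, 0 ≤ t → ‖Y t‖ ≤ ‖Y 0‖ + ∫ τ in (0:ℝ)..t, ‖k τ‖ := by
    intro n Y k hk hY t ht
    refine aee_energy Y _ (fun τ => ‖k τ‖) hk.norm (fun _ => norm_nonneg _) (fun t _ => hY t) ?_ t ht
    intro s _
    rw [inner_add_left]
    have h1 := (aee_P_facts hyp (e n) (he n) (P n) (hP n) (Y s)).2
    have h2 := real_inner_le_norm (k s) (Y s)
    rw [hT]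
    linarith
  have hVb : ∀ n t, 0 ≤ t → ‖V n t‖ ≤ ∫ τ in (0:ℝ)..t, ‖g τ‖ := by
    intro n t ht
    have := hen n (V n) g hgc (hVd n) t ht
    rwa [hV0, norm_zero, zero_add] at this
  have hXb : ∀ n t, 0 ≤ t → ‖X n t‖ ≤ ‖g 0‖ + ∫ τ in (0:ℝ)..t, ‖deriv g τ‖ := by
    intro n t ht
    have := hen n (X n) (deriv g) hhc (hX n) t ht
    rwa [hX0] at this
  have hC : ∀ S : ℝ, ∃ C : ℝ, 0 ≤ C ∧ ∀ n t, 0 ≤ t → t ≤ S → ‖V n t‖ ≤ C ∧ ‖T n (V n t)‖ ≤ C := by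
    intro S
    have hb : Continuous fun t => (‖g 0‖ + ∫ τ in (0:ℝ)..t, ‖deriv g τ‖) + ‖g t‖
        + ∫ τ in (0:ℝ)..t, ‖g τ‖ := by
      have i1 : Continuous fun t => ∫ τ in (0:ℝ)..t, ‖deriv g τ‖ :=
        continuous_iff_continuousAt.2 fun t => (aee_hasDerivAt_int _ hhc.norm t).continuousAt
      have i2 : Continuous fun t => ∫ τ in (0:ℝ)..t, ‖g τ‖ :=
        continuous_iff_continuousAt.2 fun t => (aee_hasDerivAt_int _ hgc.norm t).continuousAt
      exact ((continuous_const.add i1).add hgc.norm).add i2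
    obtain ⟨C, hC⟩ := (isCompact_Icc (a := (0:ℝ)) (b := S)).exists_bound_of_continuousOn
      hb.continuousOn
    refine ⟨max C 0, le_max_right _ _, fun n t ht htS => ?_⟩
    have h1 := (le_abs_self _).trans ((hC t ⟨ht, htS⟩).trans (le_max_left C 0))
    have h2 := hVb n t ht
    have h3 := hXb n t ht
    have h4 : ‖T n (V n t)‖ ≤ ‖X n t‖ + ‖g t‖ := by
      have : T n (V n t) = X n t - g t := by rw [hXV, add_sub_cancel_right]
      rw [this]; exact norm_sub_le _ _
    have h5 : 0 ≤ ∫ τ in (0:ℝ)..t, ‖g τ‖ := (norm_nonneg _).trans h2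
    have h6 := norm_nonneg (g t)
    have h7 := (norm_nonneg _).trans h3
    constructor <;> linarith
  have hcau : ∀ S, 0 ≤ S → ∀ η, 0 < η → ∃ N : ℕ, ∀ m ≥ N, ∀ n ≥ N, ∀ t, 0 ≤ t → t ≤ S →
      ‖V m t - V n t‖ ≤ η := by
    intro S hS η hη
    obtain ⟨C, hC0, hC⟩ := hC S
    have hsq : ∀ m n t, 0 ≤ t → t ≤ S → ‖V m t - V n t‖ ^ 2 ≤ 8 * C ^ 2 * (e m + e n) * S := by
      intro m n t ht htS
      have hder : ∀ s, HasDerivAt (fun s => ‖V m s - V n s‖ ^ 2 - 8 * C ^ 2 * (e m + e n) * s)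
          (2 * ⟪V m s - V n s, T m (V m s) - T n (V n s)⟫ - 8 * C ^ 2 * (e m + e n)) s := by
        intro s
        have h1 := ((hVd m s).sub (hVd n s)).norm_sq
        rw [add_sub_add_right_eq_sub] at h1
        have h2 := (hasDerivAt_id s).const_mul (8 * C ^ 2 * (e m + e n))
        rw [mul_one] at h2
        exact h1.sub h2
      have hanti : AntitoneOn (fun s => ‖V m s - V n s‖ ^ 2 - 8 * C ^ 2 * (e m + e n) * s)
          (Icc 0 S) := by
        refine antitoneOn_of_hasDerivWithinAt_nonpos (convex_Icc 0 S)
          (fun s hs => (hder s).continuousAt.continuousWithinAt)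
          (fun s hs => (hder s).hasDerivWithinAt) ?_
        intro s hs
        have hs : s ∈ Icc 0 S := interior_subset hs
        obtain ⟨a1, a2⟩ := hC m s hs.1 hs.2
        obtain ⟨b1, b2⟩ := hC n s hs.1 hs.2
        have := aee_compare hyp (e m) (e n) (he m) (he n) (P m) (P n) (hP m) (hP n) (V m s) (V n s)
          C a1 b1 a2 b2
        rw [hT, hT]
        linarith
      have h := hanti ⟨le_rfl, hS⟩ ⟨ht, htS⟩ ht
      simp only [hV0, sub_self, norm_zero, mul_zero] at h
      have : 8 * C ^ 2 * (e m + e n) * t ≤ 8 * C ^ 2 * (e m + e n) * S := by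
        have := (he m).le
        have := (he n).le
        gcongr
      norm_num at h
      linarith
    have hlim : Tendsto (fun n => 16 * C ^ 2 * S * e n) atTop (𝓝 0) := by
      simpa using he0.const_mul (16 * C ^ 2 * S)
    obtain ⟨N, hN⟩ := (hlim.eventually (gt_mem_nhds (show 0 < η ^ 2 by positivity))).exists
    have hmono : ∀ n ≥ N, e n ≤ e N := fun n hn => one_div_le_one_div_of_le (by positivity)
      (by have : (N:ℝ) ≤ n := by exact_mod_cast hn
          linarith)
    refine ⟨N, fun m hm n hn t ht htS => ?_⟩
    refine abs_le_of_sq_le_sq' ?_ hη.le |>.2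
    have h1 := hsq m n t ht htS
    have h2 : 8 * C ^ 2 * (e m + e n) * S ≤ 8 * C ^ 2 * (e N + e N) * S := by
      have := hmono m hm
      have := hmono n hn
      gcongr
    linarith
  obtain ⟨W, hWc, hWt, hWi⟩ := aee_limit V hVc hcau
  refine ⟨W, ⟨hWc, fun t ht => ?_⟩, fun t ht => ?_⟩
  · have hA : Tendsto (fun n => A (P n (∫ τ in (0:ℝ)..t, V n τ))) atTop
        (𝓝 (W t - ∫ τ in (0:ℝ)..t, g τ)) := by
      have : ∀ n, A (P n (∫ τ in (0:ℝ)..t, V n τ)) = V n t - ∫ τ in (0:ℝ)..t, g τ := fun n => by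
        rw [← hT]
        exact eq_sub_of_add_eq (hVU n t).symm
      simp only [this]
      exact (hWt t ht).sub_const _
    refine aee_closed hyp (fun n => P n (∫ τ in (0:ℝ)..t, V n τ)) (fun n => (hP n _).1) _ _ ?_ hA
    have hJ : ∀ n, J (P n (∫ τ in (0:ℝ)..t, V n τ)) = (1 + e n)⁻¹ • ((∫ τ in (0:ℝ)..t, V n τ)
        + e n • A (P n (∫ τ in (0:ℝ)..t, V n τ))) := by
      intro n
      have h1 := (hP n (∫ τ in (0:ℝ)..t, V n τ)).2
      have h2 : (1 + e n) ≠ 0 := by have := he n; positivity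
      rw [eq_inv_smul_iff₀ h2]
      exact sub_eq_iff_eq_add.1 h1
    simp only [hJ]
    have h1 : Tendsto (fun n => (1 + e n)⁻¹) atTop (𝓝 1) := by
      have := (he0.const_add 1).inv₀ (by norm_num)
      simpa using this
    have h2 := h1.smul ((hWi t ht).add (he0.smul hA))
    simpa using h2
  · exact le_of_tendsto (hWt t ht).norm (Eventually.of_forall fun n => hVb n t ht)

lemma aee_uniq (hyp : AEEHyp J A B c) (g V₁ V₂ : ℝ → HH) (h₁ : AEESol J A B g V₁)
    (h₂ : AEESol J A B g V₂) (t : ℝ) (ht : 0 ≤ t) : V₁ t = V₂ t := by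
  have hc : Continuous fun t => V₁ t - V₂ t := h₁.1.sub h₂.1
  have key : ∀ t, 0 ≤ t → ∃ w : VV, B w = 0 ∧ J w = ∫ τ in (0:ℝ)..t, (V₁ τ - V₂ τ) ∧
      A w = V₁ t - V₂ t := by
    intro t ht
    obtain ⟨w₁, a1, a2, a3⟩ := h₁.2 t ht
    obtain ⟨w₂, b1, b2, b3⟩ := h₂.2 t ht
    refine ⟨w₁ - w₂, by rw [map_sub, a1, b1, sub_zero], ?_, ?_⟩
    · rw [map_sub, a2, b2, intervalIntegral.integral_sub (h₁.1.intervalIntegrable _ _)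
        (h₂.1.intervalIntegrable _ _)]
    · rw [map_sub, a3, b3, sub_sub_sub_cancel_right]
  have hen := aee_energy (fun t => ∫ τ in (0:ℝ)..t, (V₁ τ - V₂ τ)) (fun t => V₁ t - V₂ t)
    (fun _ => 0) continuous_const (fun _ => le_rfl) (fun t _ => aee_hasDerivAt_int _ hc t) (by
      intro s hs
      obtain ⟨w, w1, w2, w3⟩ := key s hs
      rw [← w2, ← w3, hyp.diss w w1, zero_mul]) t ht
  simp only [intervalIntegral.integral_same, norm_zero, intervalIntegral.integral_zero,
    add_zero] at hen
  obtain ⟨w, w1, w2, w3⟩ := key t ht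
  rw [← w2] at hen
  have hw : w = 0 := hyp.inj (by rw [map_zero]; exact norm_le_zero_iff.1 hen)
  rw [hw, map_zero] at w3
  exact (sub_eq_zero.1 w3.symm)

lemma aee_sub (g₁ g₂ V₁ V₂ : ℝ → HH) (hg₁ : Continuous g₁) (hg₂ : Continuous g₂)
    (h₁ : AEESol J A B g₁ V₁) (h₂ : AEESol J A B g₂ V₂) :
    AEESol J A B (fun t => g₁ t - g₂ t) (fun t => V₁ t - V₂ t) := by
  refine ⟨h₁.1.sub h₂.1, fun t ht => ?_⟩
  obtain ⟨w₁, a1, a2, a3⟩ := h₁.2 t ht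
  obtain ⟨w₂, b1, b2, b3⟩ := h₂.2 t ht
  refine ⟨w₁ - w₂, by rw [map_sub, a1, b1, sub_zero], ?_, ?_⟩
  · rw [map_sub, a2, b2, intervalIntegral.integral_sub (h₁.1.intervalIntegrable _ _)
      (h₂.1.intervalIntegrable _ _)]
  · rw [map_sub, a3, b3, intervalIntegral.integral_sub (hg₁.intervalIntegrable _ _)
      (hg₂.intervalIntegrable _ _), sub_sub_sub_comm]

lemma aee_L1 (hyp : AEEHyp J A B c) (g : ℝ → HH)
    (hg : ∀ t : ℝ, IntervalIntegrable g volume 0 t) :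
    ∃ V, AEESol J A B g V ∧ ∀ t, 0 ≤ t → ‖V t‖ ≤ ∫ τ in (0:ℝ)..t, ‖g τ‖ := by
  obtain ⟨gk, hgk, happ⟩ := aee_approx g hg
  have hgkc : ∀ k, Continuous (gk k) := fun k => (hgk k).continuous
  choose V hV hVb using fun k => aee_smooth hyp (gk k) (hgk k)
  have hInt : ∀ k t, IntervalIntegrable (fun τ => g τ - gk k τ) volume 0 t := fun k t =>
    (hg t).sub ((hgkc k).intervalIntegrable _ _)
  have hdiff : ∀ (k l : ℕ) (t : ℝ), 0 ≤ t → t ≤ k → t ≤ l →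
      ‖V k t - V l t‖ ≤ 1 / ((k:ℝ) + 1) + 1 / ((l:ℝ) + 1) := by
    intro k l t ht hk hl
    obtain ⟨D, hD, hDb⟩ := aee_smooth hyp (fun t => gk k t - gk l t) ((hgk k).sub (hgk l))
    have h1 := aee_uniq hyp _ _ _ (aee_sub _ _ _ _ (hgkc k) (hgkc l) (hV k) (hV l)) hD t ht
    rw [h1]
    refine (hDb t ht).trans (le_trans ?_ (add_le_add (happ k t ht hk) (happ l t ht hl)))
    rw [← intervalIntegral.integral_add (hInt k t).norm (hInt l t).norm]
    refine intervalIntegral.integral_mono_on ht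
      (((hgkc k).sub (hgkc l)).norm.intervalIntegrable _ _)
      ((hInt k t).norm.add (hInt l t).norm) fun s _ => ?_
    have : gk k s - gk l s = (g s - gk l s) - (g s - gk k s) := by abel
    rw [this, add_comm]
    exact norm_sub_le _ _
  have he0 : Tendsto (fun n : ℕ => 1 / ((n:ℝ) + 1)) atTop (𝓝 0) :=
    tendsto_one_div_add_atTop_nhds_zero_nat
  have hcau : ∀ T, 0 ≤ T → ∀ η, 0 < η → ∃ N : ℕ, ∀ m ≥ N, ∀ n ≥ N, ∀ t, 0 ≤ t → t ≤ T →
      ‖V m t - V n t‖ ≤ η := by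
    intro T hT η hη
    have h1 := he0.eventually (gt_mem_nhds (show 0 < η / 2 by positivity))
    have h2 := tendsto_natCast_atTop_atTop (R := ℝ) |>.eventually (eventually_ge_atTop T)
    obtain ⟨N, hN⟩ := (h1.and h2).exists_forall_of_atTop
    refine ⟨N, fun m hm n hn t ht htT => ?_⟩
    obtain ⟨a1, a2⟩ := hN m hm
    obtain ⟨b1, b2⟩ := hN n hn
    have := hdiff m n t ht (htT.trans a2) (htT.trans b2)
    linarith
  obtain ⟨W, hWc, hWt, hWi⟩ := aee_limit V (fun k => (hV k).1) hcau
  have hev : ∀ t : ℝ, ∀ᶠ k : ℕ in atTop, t ≤ k := fun t =>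
    tendsto_natCast_atTop_atTop (R := ℝ) |>.eventually (eventually_ge_atTop t)
  refine ⟨W, ⟨hWc, fun t ht => ?_⟩, fun t ht => ?_⟩
  · choose w w1 w2 w3 using fun k => (hV k).2 t ht
    refine aee_closed hyp w w1 _ _ ?_ ?_
    · simp only [w2]; exact hWi t ht
    · simp only [w3]
      refine (hWt t ht).sub ?_
      rw [tendsto_iff_norm_sub_tendsto_zero]
      refine squeeze_zero' (Eventually.of_forall fun _ => norm_nonneg _) ?_ he0
      filter_upwards [hev t] with k hk
      rw [norm_sub_rev, ← intervalIntegral.integral_sub (hg t) ((hgkc k).intervalIntegrable _ _)]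
      exact (intervalIntegral.norm_integral_le_integral_norm ht).trans (happ k t ht hk)
  · have h1 : Tendsto (fun n : ℕ => (∫ τ in (0:ℝ)..t, ‖g τ‖) + 1 / ((n:ℝ) + 1)) atTop
        (𝓝 (∫ τ in (0:ℝ)..t, ‖g τ‖)) := by simpa using he0.const_add (∫ τ in (0:ℝ)..t, ‖g τ‖)
    refine le_of_tendsto_of_tendsto (hWt t ht).norm h1 ?_
    filter_upwards [hev t] with k hk
    refine (hVb k t ht).trans (le_trans ?_ (add_le_add_right (happ k t ht hk) _))
    rw [← intervalIntegral.integral_add (hg t).norm (hInt k t).norm]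
    refine intervalIntegral.integral_mono_on ht ((hgkc k).norm.intervalIntegrable _ _)
      ((hg t).norm.add (hInt k t).norm) fun s _ => ?_
    have : gk k s = g s - (g s - gk k s) := by abel
    conv_lhs => rw [this]
    exact norm_sub_le _ _

/-- The homogeneous-boundary evolution problem on the whole line. -/
lemma aee_homog (hyp : AEEHyp J A B c) (f g : ℝ → HH) (hfc : Continuous f)
    (hf0 : ∀ t, t ≤ 0 → f t = 0)
    (hg : ∀ t : ℝ, IntervalIntegrable g volume 0 t)
    (hfg : ∀ t, 0 ≤ t → f t = ∫ τ in (0:ℝ)..t, g τ) :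
    ∃ W : ℝ → VV, (∀ t, t ≤ 0 → W t = 0) ∧ Continuous W ∧ (∀ t, B (W t) = 0) ∧
      (∀ t, HasDerivAt (fun τ => J (W τ)) (A (W t) + f t) t) ∧
      ∀ t, 0 ≤ t → ‖J (W t)‖ ≤ (∫ τ in (0:ℝ)..t, ‖f τ‖) ∧
        ‖A (W t) + f t‖ ≤ ∫ τ in (0:ℝ)..t, ‖g τ‖ := by
  obtain ⟨V, hV, hVb⟩ := aee_L1 hyp g hg
  have hV0 : V 0 = 0 := by
    have := hVb 0 le_rfl
    rw [intervalIntegral.integral_same] at this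
    exact norm_le_zero_iff.1 this
  let V' : ℝ → HH := fun t => V (max t 0)
  have hV'c : Continuous V' := hV.1.comp (continuous_id.max continuous_const)
  have hV'pos : ∀ t, 0 ≤ t → V' t = V t := fun t ht => by simp only [V', max_eq_left ht]
  have hV'neg : ∀ t, t ≤ 0 → V' t = 0 := fun t ht => by simp only [V', max_eq_right ht, hV0]
  have key : ∀ t, ∃ w : VV, B w = 0 ∧ (J w = ∫ τ in (0:ℝ)..t, V' τ) ∧ A w = V' t - f t := by
    intro t
    rcases le_total 0 t with ht | ht
    · obtain ⟨w, w1, w2, w3⟩ := hV.2 t ht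
      refine ⟨w, w1, ?_, ?_⟩
      · rw [w2]
        refine intervalIntegral.integral_congr fun s hs => ?_
        rw [uIcc_of_le ht] at hs
        exact (hV'pos s hs.1).symm
      · rw [w3, hV'pos t ht, hfg t ht]
    · refine ⟨0, map_zero _, ?_, ?_⟩
      · rw [map_zero]
        symm
        rw [intervalIntegral.integral_congr (g := fun _ => (0:HH))]
        · simp
        · intro s hs
          rw [uIcc_of_ge ht] at hs
          exact hV'neg s hs.2
      · rw [map_zero, hV'neg t ht, hf0 t ht, sub_zero]
  choose W W1 W2 W3 using key
  have hAf : ∀ t, A (W t) + f t = V' t := fun t => by rw [W3, sub_add_cancel]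
  have hder : ∀ t, HasDerivAt (fun τ => J (W τ)) (A (W t) + f t) t := by
    intro t
    rw [hAf]
    simp only [W2]
    exact aee_hasDerivAt_int _ hV'c t
  have hW0 : ∀ t, t ≤ 0 → W t = 0 := by
    intro t ht
    refine hyp.inj ?_
    rw [W2, map_zero, intervalIntegral.integral_congr (g := fun _ => (0:HH))]
    · simp
    · intro s hs
      rw [uIcc_of_ge ht] at hs
      exact hV'neg s hs.2
  refine ⟨W, hW0, ?_, W1, hder, fun t ht => ⟨?_, ?_⟩⟩
  · have hJc : Continuous fun t => J (W t) :=
      continuous_iff_continuousAt.2 fun t => (hder t).continuousAt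
    have hAc : Continuous fun t => A (W t) := by
      simp only [W3]; exact hV'c.sub hfc
    rw [continuous_iff_continuousAt]
    intro t
    unfold ContinuousAt
    rw [tendsto_iff_norm_sub_tendsto_zero]
    have h1 : Tendsto (fun s => c⁻¹ * (‖J (W s) - J (W t)‖ + ‖A (W s) - A (W t)‖)) (𝓝 t) (𝓝 0) := by
      have a1 := tendsto_iff_norm_sub_tendsto_zero.1 (hJc.tendsto t)
      have a2 := tendsto_iff_norm_sub_tendsto_zero.1 (hAc.tendsto t)
      simpa using (a1.add a2).const_mul c⁻¹
    refine squeeze_zero (fun _ => norm_nonneg _) (fun s => ?_) h1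
    have h2 := hyp.graph (W s - W t)
    rw [map_sub, map_sub] at h2
    rw [le_inv_mul_iff₀ hyp.cpos]
    exact h2
  · have := aee_energy (fun t => J (W t)) (fun t => A (W t) + f t) (fun t => ‖f t‖) hfc.norm
      (fun _ => norm_nonneg _) (fun t _ => hder t) (fun s _ => by
        rw [inner_add_left, hyp.diss _ (W1 s), zero_add]
        exact real_inner_le_norm _ _) t ht
    simpa [hW0 0 le_rfl] using this
  · rw [hAf, hV'pos t ht]
    exact hVb t ht

end ops

end aee

/-- Abstract evolution estimate (Theorem 3.1 of the paper, following
Hassell–Qiu–Sánchez-Vizuet–Sayas): under maximal dissipativity and the lifting hypothesis,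
the problem $\dot U = A_⋆ U + G ξ + F$, $BU = χ$ with data
$F ∈ W_+^1(ℍ)$ and $Ξ = (ξ,χ) ∈ W_+^2(𝕄_1×𝕄_2)$ has a unique solution
$U ∈ C_+^1(ℍ) ∩ C_+(𝕍)$, satisfying the two energy estimates. -/
theorem abstract_evolution_estimate
    {HH VV M1 M2 : Type*}
    [NormedAddCommGroup HH] [InnerProductSpace ℝ HH] [CompleteSpace HH]
    [NormedAddCommGroup VV] [NormedSpace ℝ VV] [CompleteSpace VV]
    [NormedAddCommGroup M1] [InnerProductSpace ℝ M1] [CompleteSpace M1]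
    [NormedAddCommGroup M2] [InnerProductSpace ℝ M2] [CompleteSpace M2]
    (J : VV →L[ℝ] HH) (Astar : VV →L[ℝ] HH) (G : M1 →L[ℝ] HH) (B : VV →L[ℝ] M2)
    -- 𝕍 ⊂ ℍ with continuous dense embedding
    (hJinj : Function.Injective J) (hJdense : DenseRange J)
    -- the graph norm of A_⋆ is equivalent to the norm of 𝕍
    (cg1 cg2 : ℝ) (hcg1 : 0 < cg1) (hcg2 : 0 < cg2)
    (hgraph : ∀ v : VV, cg1 * ‖v‖ ≤ ‖J v‖ + ‖Astar v‖ ∧ ‖J v‖ + ‖Astar v‖ ≤ cg2 * ‖v‖)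
    -- ±A (A = A_⋆ restricted to Ker B) are maximal dissipative
    (hdiss : ∀ v : VV, B v = 0 → ⟪Astar v, J v⟫ = 0)
    (hmax₁ : ∀ f : HH, ∃ v : VV, B v = 0 ∧ J v - Astar v = f)
    (hmax₂ : ∀ f : HH, ∃ v : VV, B v = 0 ∧ J v + Astar v = f)
    -- lifting hypothesis for the steady-state problem, with constant C_lift
    (Clift : ℝ) (hClift : 0 < Clift)
    (hlift : ∀ (ξ0 : M1) (χ0 : M2), ∃ v : VV,
      (J v - Astar v = G ξ0 ∧ B v = χ0) ∧
      ∀ v' : VV, J v' - Astar v' = G ξ0 ∧ B v' = χ0 → v' = v)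
    (hliftbound : ∀ (ξ0 : M1) (χ0 : M2) (v : VV),
      J v - Astar v = G ξ0 ∧ B v = χ0 → ‖J v‖ + ‖v‖ ≤ Clift * ‖(ξ0, χ0)‖)
    -- data
    (F : ℝ → HH) (ξ : ℝ → M1) (χ : ℝ → M2)
    (hF : WP 1 F) (hΞ : WP 2 (fun t => (ξ t, χ t))) :
    ∃ U : ℝ → VV,
      SolvesACP J Astar G B ξ χ F U ∧
      (∀ V : ℝ → VV, SolvesACP J Astar G B ξ χ F V → V = U) ∧
      ∀ t : ℝ, 0 ≤ t →
        ‖J (U t)‖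
            ≤ Clift * ((∫ τ in (0:ℝ)..t, ‖(ξ τ, χ τ)‖)
                + 2 * ∫ τ in (0:ℝ)..t, ‖deriv (fun σ => (ξ σ, χ σ)) τ‖)
              + ∫ τ in (0:ℝ)..t, ‖F τ‖ ∧
        ‖Astar (U t) + G (ξ t) + F t‖
            ≤ Clift * ((∫ τ in (0:ℝ)..t, ‖deriv (fun σ => (ξ σ, χ σ)) τ‖)
                + 2 * ∫ τ in (0:ℝ)..t, ‖iteratedDeriv 2 (fun σ => (ξ σ, χ σ)) τ‖)
              + ∫ τ in (0:ℝ)..t, ‖deriv F τ‖ := by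
  have hyp : AEEHyp J Astar B cg1 := ⟨hJinj, hcg1, fun v => (hgraph v).1, hdiss, hmax₁⟩
  set Ξ : ℝ → M1 × M2 := fun t => (ξ t, χ t) with hΞdef
  -- the lifting operator
  obtain ⟨L, hL1, hL2, hL3⟩ : ∃ L : (M1 × M2) →L[ℝ] VV,
      (∀ p, J (L p) - Astar (L p) = G p.1) ∧ (∀ p, B (L p) = p.2) ∧
      ∀ p, ‖J (L p)‖ ≤ Clift * ‖p‖ := by
    choose l hl hlu using hlift
    let L : (M1 × M2) →ₗ[ℝ] VV :=
      { toFun := fun p => l p.1 p.2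
        map_add' := fun p q => by
          symm
          refine hlu _ _ _ ⟨?_, ?_⟩
          · rw [map_add, map_add, add_sub_add_comm, (hl _ _).1, (hl _ _).1, Prod.fst_add, map_add]
          · rw [map_add, (hl _ _).2, (hl _ _).2, Prod.snd_add]
        map_smul' := fun a p => by
          symm
          refine hlu _ _ _ ⟨?_, ?_⟩
          · simp only [RingHom.id_apply, Prod.smul_fst]
            rw [map_smul, map_smul, ← smul_sub, (hl _ _).1, map_smul]
          · simp only [RingHom.id_apply, Prod.smul_snd]
            rw [map_smul, (hl _ _).2] }
    refine ⟨L.mkContinuous Clift fun p => ?_, fun p => (hl p.1 p.2).1, fun p => (hl p.1 p.2).2,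
      fun p => ?_⟩
    · have := hliftbound p.1 p.2 _ (hl p.1 p.2)
      have h2 := norm_nonneg (J (l p.1 p.2))
      change ‖l p.1 p.2‖ ≤ Clift * ‖(p.1, p.2)‖
      linarith
    · have := hliftbound p.1 p.2 _ (hl p.1 p.2)
      have h2 := norm_nonneg (l p.1 p.2)
      change ‖J (l p.1 p.2)‖ ≤ Clift * ‖(p.1, p.2)‖
      linarith
  -- unpack the data
  obtain ⟨hFc, hF0, hFi, hFt⟩ := hF
  obtain ⟨hΞc, hΞ0, hΞi, hΞt⟩ := hΞ
  simp only [Nat.sub_self, iteratedDeriv_zero, iteratedDeriv_one] at hFi hFt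
  simp only [Nat.add_one_sub_one, iteratedDeriv_one] at hΞc hΞt
  have hFcont : Continuous F := hFc.continuous
  have hΞcont : Continuous Ξ := hΞc.continuous
  have hΞc1 : ContDiff ℝ 1 Ξ := by exact_mod_cast hΞc
  have hΞd : ∀ t, HasDerivAt Ξ (deriv Ξ t) t := fun t =>
    (hΞc1.differentiable one_ne_zero t).hasDerivAt
  have hΞ'c : Continuous (deriv Ξ) := hΞc1.continuous_deriv le_rfl
  have hΞ'0 : ∀ t, t ≤ 0 → deriv Ξ t = 0 := by
    have h1 : Set.EqOn (deriv Ξ) (fun _ => 0) (Set.Iio 0) := by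
      intro t ht
      have : Ξ =ᶠ[nhds t] fun _ => 0 := by
        filter_upwards [Iio_mem_nhds ht] with s hs
        exact hΞ0 s (le_of_lt hs)
      rw [this.deriv_eq]
      simp
    have h2 := h1.closure hΞ'c continuous_const
    rw [closure_Iio] at h2
    exact fun t ht => h2 ht
  have hΞI : ∀ t, Ξ t = ∫ τ in (0:ℝ)..t, deriv Ξ τ := by
    intro t
    rw [intervalIntegral.integral_eq_sub_of_hasDerivAt (fun s _ => hΞd s)
      (hΞ'c.intervalIntegrable _ _), hΞ0 0 le_rfl, sub_zero]
  have hΞ'I : ∀ t, deriv Ξ t = ∫ τ in (0:ℝ)..t, iteratedDeriv 2 Ξ τ := by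
    intro t
    rw [← hΞt, hΞ'0 0 le_rfl, sub_zero]
  have hFI : ∀ t, F t = ∫ τ in (0:ℝ)..t, deriv F τ := by
    intro t
    rw [← hFt, hF0 0 le_rfl, sub_zero]
  have iF : ∀ t, IntervalIntegrable (deriv F) MeasureTheory.volume 0 t := fun t =>
    hFi.intervalIntegrable
  have iΞ' : ∀ t, IntervalIntegrable (deriv Ξ) MeasureTheory.volume 0 t := fun t =>
    hΞ'c.intervalIntegrable _ _
  have iΞ'' : ∀ t, IntervalIntegrable (iteratedDeriv 2 Ξ) MeasureTheory.volume 0 t := fun t =>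
    hΞi.intervalIntegrable
  let K : (M1 × M2) →L[ℝ] HH := J.comp L
  have hK : ∀ p, ‖K p‖ ≤ Clift * ‖p‖ := hL3
  have hKJ : ∀ p, K p = J (L p) := fun p => rfl
  have iK : ∀ t, IntervalIntegrable (fun τ => K (deriv Ξ τ - iteratedDeriv 2 Ξ τ))
      MeasureTheory.volume 0 t := fun t =>
    ⟨K.integrable_comp ((iΞ' t).sub (iΞ'' t)).1, K.integrable_comp ((iΞ' t).sub (iΞ'' t)).2⟩
  have ig : ∀ t, IntervalIntegrable (fun τ => deriv F τ + K (deriv Ξ τ - iteratedDeriv 2 Ξ τ))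
      MeasureTheory.volume 0 t := fun t => (iF t).add (iK t)
  have hfc : Continuous fun t => F t + K (Ξ t - deriv Ξ t) :=
    hFcont.add (K.continuous.comp (hΞcont.sub hΞ'c))
  obtain ⟨W, hW0, hWc, hWB, hWd, hWe⟩ := aee_homog hyp (fun t => F t + K (Ξ t - deriv Ξ t))
    (fun τ => deriv F τ + K (deriv Ξ τ - iteratedDeriv 2 Ξ τ)) hfc
    (fun t ht => by rw [hF0 t ht, hΞ0 t ht, hΞ'0 t ht, sub_zero, map_zero, add_zero]) ig
    (fun t ht => by
      rw [intervalIntegral.integral_add (iF t) (iK t),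
        K.intervalIntegral_comp_comm ((iΞ' t).sub (iΞ'' t)),
        intervalIntegral.integral_sub (iΞ' t) (iΞ'' t), ← hΞ'I, ← hΞI, ← hFI])
  have hrhs : ∀ t, Astar (W t + L (Ξ t)) + G (ξ t) + F t
      = (Astar (W t) + (F t + K (Ξ t - deriv Ξ t))) + K (deriv Ξ t) := by
    intro t
    have h1 : G (ξ t) = K (Ξ t) - Astar (L (Ξ t)) := (hL1 (Ξ t)).symm
    rw [h1, map_add, map_sub]
    abel
  have hsol : SolvesACP J Astar G B ξ χ F (fun t => W t + L (Ξ t)) := by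
    refine ⟨fun t ht => ?_, hWc.add (L.continuous.comp hΞcont), fun t => ?_, fun t => ?_⟩
    · simp only [hW0 t ht, hΞ0 t ht, map_zero, add_zero]
    · rw [map_add, hWB, zero_add, hL2]
    · rw [hrhs]
      simp only [map_add]
      exact (hWd t).add (K.hasFDerivAt.comp_hasDerivAt t (hΞd t))
  refine ⟨fun t => W t + L (Ξ t), hsol, ?_, ?_⟩
  · -- uniqueness
    intro V hV
    obtain ⟨v1, v2, v3, v4⟩ := hV
    obtain ⟨u1, u2, u3, u4⟩ := hsol
    funext t
    rcases le_total t 0 with ht | ht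
    · rw [v1 t ht]; exact (u1 t ht).symm
    · have hen := aee_energy (fun t => J (V t) - J (W t + L (Ξ t)))
        _ (fun _ => 0) continuous_const (fun _ => le_rfl) (fun t _ => (v4 t).sub (u4 t)) (by
          intro s _
          have h1 := hdiss (V s - (W s + L (Ξ s))) (by rw [map_sub, v3, u3, sub_self])
          rw [add_sub_add_right_eq_sub, add_sub_add_right_eq_sub, ← map_sub, ← map_sub, h1,
            zero_mul]) t ht
      have u10 : W 0 + L (Ξ 0) = 0 := u1 0 le_rfl
      simp only [v1 0 le_rfl, u10, map_zero, sub_zero, norm_zero,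
        intervalIntegral.integral_zero, add_zero] at hen
      exact hJinj (sub_eq_zero.1 (norm_le_zero_iff.1 hen))
  · intro t ht
    obtain ⟨e1, e2⟩ := hWe t ht
    have iΞ : IntervalIntegrable Ξ MeasureTheory.volume 0 t := hΞcont.intervalIntegrable _ _
    have iFF : IntervalIntegrable F MeasureTheory.volume 0 t := hFcont.intervalIntegrable _ _
    constructor
    · have h1 : ‖K (Ξ t)‖ ≤ Clift * ∫ τ in (0:ℝ)..t, ‖deriv Ξ τ‖ := by
        refine (hK _).trans ?_
        gcongr
        conv_lhs => rw [hΞI t]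
        exact intervalIntegral.norm_integral_le_integral_norm ht
      have h2 : (∫ τ in (0:ℝ)..t, ‖F τ + K (Ξ τ - deriv Ξ τ)‖) ≤
          (∫ τ in (0:ℝ)..t, ‖F τ‖) + Clift * ((∫ τ in (0:ℝ)..t, ‖Ξ τ‖)
            + ∫ τ in (0:ℝ)..t, ‖deriv Ξ τ‖) := by
        rw [← intervalIntegral.integral_add iΞ.norm (iΞ' t).norm,
          ← intervalIntegral.integral_const_mul,
          ← intervalIntegral.integral_add iFF.norm ((iΞ.norm.add (iΞ' t).norm).const_mul _)]
        refine intervalIntegral.integral_mono_on ht (hfc.norm.intervalIntegrable _ _)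
          (iFF.norm.add ((iΞ.norm.add (iΞ' t).norm).const_mul _)) fun s _ => ?_
        refine (norm_add_le _ _).trans (add_le_add_right ((hK _).trans ?_) _)
        gcongr
        exact norm_sub_le _ _
      have h3 : ‖J (W t + L (Ξ t))‖ ≤ ‖J (W t)‖ + ‖K (Ξ t)‖ := by
        rw [map_add]; exact norm_add_le _ _
      change ‖J (W t + L (Ξ t))‖ ≤ Clift * ((∫ τ in (0:ℝ)..t, ‖Ξ τ‖)
        + 2 * ∫ τ in (0:ℝ)..t, ‖deriv Ξ τ‖) + ∫ τ in (0:ℝ)..t, ‖F τ‖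
      linarith
    · have h1 : ‖K (deriv Ξ t)‖ ≤ Clift * ∫ τ in (0:ℝ)..t, ‖iteratedDeriv 2 Ξ τ‖ := by
        refine (hK _).trans ?_
        gcongr
        conv_lhs => rw [hΞ'I t]
        exact intervalIntegral.norm_integral_le_integral_norm ht
      have h2 : (∫ τ in (0:ℝ)..t, ‖deriv F τ + K (deriv Ξ τ - iteratedDeriv 2 Ξ τ)‖) ≤
          (∫ τ in (0:ℝ)..t, ‖deriv F τ‖) + Clift * ((∫ τ in (0:ℝ)..t, ‖deriv Ξ τ‖)
            + ∫ τ in (0:ℝ)..t, ‖iteratedDeriv 2 Ξ τ‖) := by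
        rw [← intervalIntegral.integral_add (iΞ' t).norm (iΞ'' t).norm,
          ← intervalIntegral.integral_const_mul,
          ← intervalIntegral.integral_add (iF t).norm
            (((iΞ' t).norm.add (iΞ'' t).norm).const_mul _)]
        refine intervalIntegral.integral_mono_on ht (ig t).norm
          ((iF t).norm.add (((iΞ' t).norm.add (iΞ'' t).norm).const_mul _)) fun s _ => ?_
        refine (norm_add_le _ _).trans (add_le_add_right ((hK _).trans ?_) _)
        gcongr
        exact norm_sub_le _ _
      have h3 : ‖Astar (W t + L (Ξ t)) + G (ξ t) + F t‖ ≤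
          ‖Astar (W t) + (F t + K (Ξ t - deriv Ξ t))‖ + ‖K (deriv Ξ t)‖ := by
        rw [hrhs]; exact norm_add_le _ _
      simp only
      linarith
end
end

section
/- (Fully discrete energy-norm estimate.) Suppose β₀ ∈ W_+^6(H^{1/2}(Γ)) and β₁ ∈ W_+^5(H^{-1/2}(Γ)). Let (u^h,u^⋆) solve the semidiscrete problem (2.10) and (u_k^h,u_k^⋆) its trapezoidal-rule time discretization (4.3), with errors e_k^h := u^h − u_k^h, e_k^⋆ := u^⋆ − u_k^⋆ and hatted quantities ê_k^h := α_k e_k^h, f̂_k^h := ∂_k e_k^h, ê_k^⋆ := α_k e_k^⋆, f̂_k^⋆ := ∂_k e_k^⋆. Then for all t ≥ 0: ‖f̂_k^h(t)‖_{Ω_-} + ‖κ∇ê_k^h(t)‖_{Ω_-} + ‖f̂_k^⋆(t)‖_{ℝ^d∖Γ} + ‖∇ê_k^⋆(t)‖_{ℝ^d∖Γ} ≤ C k² t (H₃(β₀⁽³⁾,t|H^{1/2}(Γ)) + H₂(β₁⁽³⁾,t|H^{-1/2}(Γ))), with C independent of t, k, and the discrete spaces. -/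
open scoped RealInnerProductSpace

noncomputable section

/-- The averaging operator `α_k g (t) = (g t + g (t-k))/2`. -/
def amean {X : Type*} [AddCommGroup X] [Module ℝ X] (k : ℝ) (f : ℝ → X) (t : ℝ) : X :=
  (2⁻¹ : ℝ) • (f t + f (t - k))

/-- The differencing operator `∂_k g (t) = (g t - g (t-k))/k`. -/
def dquot {X : Type*} [AddCommGroup X] [Module ℝ X] (k : ℝ) (f : ℝ → X) (t : ℝ) : X :=
  (k⁻¹ : ℝ) • (f t - f (t - k))

/-- A (strong, causal) solution of the exotic transmission problem (2.10).  The exterior field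
`u^⋆` is represented together with the `H(div)` realization `wst` of its gradient, so that
`Δu^⋆(t) = ∇·wst t` and `∂_ν^± u^⋆(t) = γ_ν^± (wst t)`. -/
def Solves210
    {L2Ω L2Ωv L2s L2sv Hp Hm H1Ω H1s Hdiv : Type*}
    [NormedAddCommGroup L2Ω] [InnerProductSpace ℝ L2Ω]
    [NormedAddCommGroup L2Ωv] [InnerProductSpace ℝ L2Ωv]
    [NormedAddCommGroup L2s] [InnerProductSpace ℝ L2s]
    [NormedAddCommGroup L2sv] [InnerProductSpace ℝ L2sv]
    [NormedAddCommGroup Hp] [InnerProductSpace ℝ Hp]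
    [NormedAddCommGroup Hm] [InnerProductSpace ℝ Hm]
    [NormedAddCommGroup H1Ω] [NormedSpace ℝ H1Ω]
    [NormedAddCommGroup H1s] [NormedSpace ℝ H1s]
    [NormedAddCommGroup Hdiv] [NormedSpace ℝ Hdiv]
    (ι : H1Ω →L[ℝ] L2Ω) (grad : H1Ω →L[ℝ] L2Ωv) (γ : H1Ω →L[ℝ] Hp)
    (ιs : H1s →L[ℝ] L2s) (grads : H1s →L[ℝ] L2sv) (γm γp : H1s →L[ℝ] Hp)
    (ιdiv : Hdiv →L[ℝ] L2sv) (divs : Hdiv →L[ℝ] L2s) (γνm γνp : Hdiv →L[ℝ] Hm)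
    (dpair : Hm →L[ℝ] Hp →L[ℝ] ℝ)
    (cinv2 : L2Ω →L[ℝ] L2Ω) (kap : L2Ωv →L[ℝ] L2Ωv)
    (Uh : Submodule ℝ H1Ω) (Xh : Submodule ℝ Hm) (Yh : Submodule ℝ Hp)
    (β0 : ℝ → Hp) (β1 : ℝ → Hm)
    (uh : ℝ → H1Ω) (us : ℝ → H1s) (wst : ℝ → Hdiv) : Prop :=
  (∀ t : ℝ, uh t ∈ Uh) ∧ Causal uh ∧ Causal us ∧ Causal wst ∧
  ContDiff ℝ 2 (fun τ => ι (uh τ)) ∧ ContDiff ℝ 2 (fun τ => ιs (us τ)) ∧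
  Continuous uh ∧ Continuous us ∧
  (∀ t : ℝ, ιdiv (wst t) = grads (us t)) ∧
  (∀ t : ℝ, ∀ w ∈ Uh,
    ⟪cinv2 (iteratedDeriv 2 (fun τ => ι (uh τ)) t), ι w⟫
      + ⟪kap (grad (uh t)), grad w⟫
      + dpair (γνm (wst t) - γνp (wst t)) (γ w)
      = dpair (β1 t) (γ w)) ∧
  (∀ t : ℝ, iteratedDeriv 2 (fun τ => ιs (us τ)) t = divs (wst t)) ∧
  (∀ t : ℝ, γm (us t) - γp (us t) ∈ Yh) ∧
  (∀ t : ℝ, γνm (wst t) - γνp (wst t) ∈ Xh) ∧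
  (∀ t : ℝ, ∀ ψ ∈ Yh, dpair (γνm (wst t)) ψ = 0) ∧
  (∀ t : ℝ, ∀ μ ∈ Xh, dpair μ (γ (uh t) - γp (us t) - β0 t) = 0)

/-- A (causal) solution of the fully discrete problem (4.3): trapezoidal-rule time stepping
of the exotic transmission problem (2.10), extended to continuous time. -/
def Solves43
    {L2Ω L2Ωv L2s L2sv Hp Hm H1Ω H1s Hdiv : Type*}
    [NormedAddCommGroup L2Ω] [InnerProductSpace ℝ L2Ω]
    [NormedAddCommGroup L2Ωv] [InnerProductSpace ℝ L2Ωv]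
    [NormedAddCommGroup L2s] [InnerProductSpace ℝ L2s]
    [NormedAddCommGroup L2sv] [InnerProductSpace ℝ L2sv]
    [NormedAddCommGroup Hp] [InnerProductSpace ℝ Hp]
    [NormedAddCommGroup Hm] [InnerProductSpace ℝ Hm]
    [NormedAddCommGroup H1Ω] [NormedSpace ℝ H1Ω]
    [NormedAddCommGroup H1s] [NormedSpace ℝ H1s]
    [NormedAddCommGroup Hdiv] [NormedSpace ℝ Hdiv]
    (ι : H1Ω →L[ℝ] L2Ω) (grad : H1Ω →L[ℝ] L2Ωv) (γ : H1Ω →L[ℝ] Hp)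
    (ιs : H1s →L[ℝ] L2s) (grads : H1s →L[ℝ] L2sv) (γm γp : H1s →L[ℝ] Hp)
    (ιdiv : Hdiv →L[ℝ] L2sv) (divs : Hdiv →L[ℝ] L2s) (γνm γνp : Hdiv →L[ℝ] Hm)
    (dpair : Hm →L[ℝ] Hp →L[ℝ] ℝ)
    (cinv2 : L2Ω →L[ℝ] L2Ω) (kap : L2Ωv →L[ℝ] L2Ωv)
    (Uh : Submodule ℝ H1Ω) (Xh : Submodule ℝ Hm) (Yh : Submodule ℝ Hp)
    (k : ℝ) (β0 : ℝ → Hp) (β1 : ℝ → Hm)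
    (ukh : ℝ → H1Ω) (uks : ℝ → H1s) (wkst : ℝ → Hdiv) : Prop :=
  (∀ t : ℝ, ukh t ∈ Uh) ∧ Causal ukh ∧ Causal uks ∧ Causal wkst ∧
  (∀ t : ℝ, ιdiv (wkst t) = grads (uks t)) ∧
  (∀ t : ℝ, ∀ w ∈ Uh,
    ⟪cinv2 (dquot k (dquot k (fun τ => ι (ukh τ))) t), ι w⟫
      + ⟪kap (grad (amean k (amean k ukh) t)), grad w⟫
      + dpair (amean k (amean k (fun τ => γνm (wkst τ) - γνp (wkst τ))) t) (γ w)
      = dpair (amean k (amean k β1) t) (γ w)) ∧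
  (∀ t : ℝ, dquot k (dquot k (fun τ => ιs (uks τ))) t
      = amean k (amean k (fun τ => divs (wkst τ))) t) ∧
  (∀ t : ℝ, γm (uks t) - γp (uks t) ∈ Yh) ∧
  (∀ t : ℝ, γνm (wkst t) - γνp (wkst t) ∈ Xh) ∧
  (∀ t : ℝ, ∀ ψ ∈ Yh, dpair (γνm (wkst t)) ψ = 0) ∧
  (∀ t : ℝ, ∀ μ ∈ Xh, dpair μ (γ (ukh t) - γp (uks t) - β0 t) = 0)

/-! ### Elementary facts on difference quotients -/

open MeasureTheory Filter Topology

theorem dq_hasDerivAt {X : Type*} [NormedAddCommGroup X] [NormedSpace ℝ X] {f f' : ℝ → X}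
    (hf : ∀ t, HasDerivAt f (f' t) t) (h t : ℝ) :
    HasDerivAt (dquot h f) (dquot h f' t) t := by
  have h1 : HasDerivAt (fun s => f (s - h)) (f' (t - h)) t := by
    exact (hf (t - h)).comp_sub_const t h
  exact ((hf t).sub h1).const_smul h⁻¹

theorem dq_continuous {X : Type*} [NormedAddCommGroup X] [NormedSpace ℝ X] {f : ℝ → X}
    (hf : Continuous f) (h : ℝ) : Continuous (dquot h f) := by
  unfold dquot
  fun_prop

theorem dq_causal {X : Type*} [NormedAddCommGroup X] [NormedSpace ℝ X] {f : ℝ → X}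
    (hf : Causal f) {h : ℝ} (hh : 0 ≤ h) : Causal (dquot h f) := by
  intro t ht
  simp [dquot, hf t ht, hf (t - h) (by linarith)]

theorem dq_clm {X Y : Type*} [NormedAddCommGroup X] [NormedSpace ℝ X]
    [NormedAddCommGroup Y] [NormedSpace ℝ Y] (J : X →L[ℝ] Y) (f : ℝ → X) (h t : ℝ) :
    dquot h (fun τ => J (f τ)) t = J (dquot h f t) := by
  simp [dquot]

theorem dq_tendsto {X : Type*} [NormedAddCommGroup X] [NormedSpace ℝ X] {f : ℝ → X} {y : X}
    {t : ℝ} (hf : HasDerivAt f y t) :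
    Tendsto (fun h => dquot h f t) (𝓝[>] 0) (𝓝 y) := by
  have h1 := hf.tendsto_slope_zero
  have h2 : Tendsto (fun h : ℝ => -h) (𝓝[>] 0) (𝓝[≠] 0) := by
    refine tendsto_nhdsWithin_iff.2 ⟨?_, ?_⟩
    · have : Tendsto (fun h : ℝ => -h) (𝓝 0) (𝓝 (-0)) := (continuous_neg).tendsto 0
      rw [neg_zero] at this
      exact this.mono_left nhdsWithin_le_nhds
    · filter_upwards [self_mem_nhdsWithin] with h hh
      have : (0:ℝ) < h := hh
      simp [this.ne']
  have h3 := h1.comp h2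
  refine h3.congr' ?_
  filter_upwards with h
  simp only [Function.comp, dquot, inv_neg, neg_smul, ← sub_eq_add_neg]
  rw [← smul_neg, neg_sub]

/-- The second function is an integrable weak derivative of the first, vanishing for negative times. -/
def Prim {X : Type*} [NormedAddCommGroup X] [NormedSpace ℝ X] (f f' : ℝ → X) : Prop :=
  (∀ a b, IntervalIntegrable f' volume a b) ∧ (∀ a b, f b - f a = ∫ τ in a..b, f' τ) ∧
    ∀ t < 0, f' t = 0

theorem Prim.of_deriv {X : Type*} [NormedAddCommGroup X] [NormedSpace ℝ X] [CompleteSpace X]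
    {f f' : ℝ → X}
    (hf : ∀ t, HasDerivAt f (f' t) t) (hc : Continuous f') (h0 : ∀ t < 0, f' t = 0) :
    Prim f f' := by
  refine ⟨fun a b => hc.intervalIntegrable a b, fun a b => ?_, h0⟩
  rw [intervalIntegral.integral_eq_sub_of_hasDerivAt (fun t _ => hf t)
    (hc.intervalIntegrable a b)]

theorem Prim.continuous {X : Type*} [NormedAddCommGroup X] [NormedSpace ℝ X]
    {f f' : ℝ → X} (hp : Prim f f') : Continuous f := by
  obtain ⟨h1, h2, h3⟩ := hp
  have : f = fun b => f 0 + ∫ τ in (0:ℝ)..b, f' τ := by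
    funext b
    rw [← h2 0 b]; abel
  rw [this]
  exact continuous_const.add (intervalIntegral.continuous_primitive h1 0)

theorem Prim.dquot {X : Type*} [NormedAddCommGroup X] [NormedSpace ℝ X]
    {f f' : ℝ → X} (hp : Prim f f') {h : ℝ} (hh : 0 ≤ h) : Prim (dquot h f) (dquot h f') := by
  obtain ⟨h1, h2, h3⟩ := hp
  have hs : ∀ a b, IntervalIntegrable (fun t => f' (t - h)) volume a b := by
    intro a b
    have := (h1 (a - h) (b - h)).comp_sub_right h
    simpa using this
  refine ⟨fun a b => ?_, fun a b => ?_, fun t ht => ?_⟩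
  · exact ((h1 a b).sub (hs a b)).smul h⁻¹
  · unfold _root_.dquot
    rw [intervalIntegral.integral_smul, intervalIntegral.integral_sub (h1 a b) (hs a b),
      intervalIntegral.integral_comp_sub_right, ← h2, ← h2, ← smul_sub]
    congr 1
    abel
  · simp [_root_.dquot, h3 t ht, h3 (t - h) (by linarith)]

theorem Prim.int_dquot_le {X : Type*} [NormedAddCommGroup X] [NormedSpace ℝ X]
    {f f' : ℝ → X} (hp : Prim f f') {h : ℝ} (hh : 0 < h) {t : ℝ} (ht : 0 ≤ t) :
    ∫ s in (0:ℝ)..t, ‖_root_.dquot h f s‖ ≤ ∫ s in (0:ℝ)..t, ‖f' s‖ := by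
  have hfc := hp.continuous
  obtain ⟨h1, h2, h3⟩ := hp
  have hn : ∀ a b, IntervalIntegrable (fun s => ‖f' s‖) volume a b := fun a b => (h1 a b).norm
  set Φ : ℝ → ℝ := fun s => ∫ τ in (0:ℝ)..s, ‖f' τ‖ with hΦ
  have hΦc : Continuous Φ := intervalIntegral.continuous_primitive hn 0
  have hΦmono : Monotone Φ := by
    intro a b hab
    have : Φ b - Φ a = ∫ τ in a..b, ‖f' τ‖ :=
      intervalIntegral.integral_interval_sub_left (hn 0 b) (hn 0 a)
    have h0 : 0 ≤ ∫ τ in a..b, ‖f' τ‖ :=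
      intervalIntegral.integral_nonneg hab (fun _ _ => norm_nonneg _)
    linarith
  have hΦ0 : ∀ s ≤ 0, Φ s = 0 := by
    intro s hs
    have : ∫ τ in s..(0:ℝ), ‖f' τ‖ = 0 := by
      apply intervalIntegral.integral_zero_ae
      have : ∀ᵐ x : ℝ, x ≠ 0 := by simp [ae_iff]
      filter_upwards [this] with x hx hxm
      rw [Set.uIoc_of_le hs] at hxm
      simp [h3 x (lt_of_le_of_ne hxm.2 hx)]
    rw [hΦ]
    simp only
    rw [intervalIntegral.integral_symm, this, neg_zero]
  have hpt : ∀ s, ‖_root_.dquot h f s‖ ≤ h⁻¹ * (Φ s - Φ (s - h)) := by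
    intro s
    unfold _root_.dquot
    rw [norm_smul, Real.norm_of_nonneg (inv_nonneg.2 hh.le)]
    gcongr
    rw [h2]
    have : Φ s - Φ (s - h) = ∫ τ in (s - h)..s, ‖f' τ‖ :=
      intervalIntegral.integral_interval_sub_left (hn 0 s) (hn 0 (s - h))
    rw [this]
    exact intervalIntegral.norm_integral_le_integral_norm (by linarith)
  have hΦi : ∀ a b, IntervalIntegrable Φ volume a b := fun a b => hΦc.intervalIntegrable a b
  have hΦs : Continuous (fun s => Φ (s - h)) := by fun_prop
  calc ∫ s in (0:ℝ)..t, ‖_root_.dquot h f s‖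
      ≤ ∫ s in (0:ℝ)..t, h⁻¹ * (Φ s - Φ (s - h)) := by
        apply intervalIntegral.integral_mono_on ht
        · exact (dq_continuous hfc h).norm.intervalIntegrable _ _
        · exact (continuous_const.mul (hΦc.sub hΦs)).intervalIntegrable _ _
        · intro s _; exact hpt s
    _ = h⁻¹ * ((∫ s in (0:ℝ)..t, Φ s) - ∫ s in (0 - h)..(t - h), Φ s) := by
        rw [intervalIntegral.integral_const_mul, intervalIntegral.integral_sub (hΦi _ _)
          (hΦs.intervalIntegrable _ _), intervalIntegral.integral_comp_sub_right]
    _ = h⁻¹ * ((∫ s in (t - h)..t, Φ s) - ∫ s in (0 - h)..0, Φ s) := by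
        congr 1
        have e1 := intervalIntegral.integral_add_adjacent_intervals (hΦi (0 - h) 0) (hΦi 0 t)
        have e2 := intervalIntegral.integral_add_adjacent_intervals (hΦi (0 - h) (t - h))
          (hΦi (t - h) t)
        linarith
    _ ≤ h⁻¹ * (h * Φ t) := by
        gcongr
        have e1 : ∫ s in (0 - h)..0, Φ s = 0 := by
          rw [intervalIntegral.integral_congr (g := fun _ => (0:ℝ))]
          · simp
          · intro x hx
            rw [Set.uIcc_of_le (by linarith)] at hx
            exact hΦ0 x hx.2
        have e2 : ∫ s in (t - h)..t, Φ s ≤ ∫ s in (t - h)..t, Φ t := by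
          apply intervalIntegral.integral_mono_on (by linarith) (hΦi _ _) (by simp)
          intro x hx
          exact hΦmono hx.2
        rw [e1, sub_zero]
        simpa using e2
    _ = Φ t := by field_simp

/-! ### Continuous energy estimate -/

theorem deriv_zero_of_causal {X : Type*} [NormedAddCommGroup X] [NormedSpace ℝ X]
    {f f' : ℝ → X} (hf : ∀ t, HasDerivAt f (f' t) t) (h0 : Causal f) : Causal f' := by
  intro t ht
  have h1 := dq_tendsto (hf t)
  have h2 : Tendsto (fun h => dquot h f t) (𝓝[>] 0) (𝓝 0) := by
    refine tendsto_const_nhds.congr' ?_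
    filter_upwards [self_mem_nhdsWithin] with h hh
    have : (0:ℝ) < h := hh
    simp [dquot, h0 t ht, h0 (t - h) (by linarith)]
  exact tendsto_nhds_unique h1 h2

theorem energy_cont {H M S : Type*} [NormedAddCommGroup H] [NormedSpace ℝ H] [CompleteSpace H]
    [NormedAddCommGroup M] [InnerProductSpace ℝ M] [CompleteSpace M]
    [NormedAddCommGroup S] [InnerProductSpace ℝ S]
    (J : H →L[ℝ] M) (A : H →L[ℝ] S) (v : ℝ → H) (g' g'' F : ℝ → M)
    (hv : Continuous v) (hv0 : Causal v)
    (hg : ∀ t, HasDerivAt (fun τ => J (v τ)) (g' t) t)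
    (hg' : ∀ t, HasDerivAt g' (g'' t) t)
    (hF : Continuous F) (hF0 : Causal F)
    (hw : ∀ t w, ⟪g'' t, J w⟫ + ⟪A (v t), A w⟫ = ⟪F t, J w⟫)
    (t : ℝ) (ht : 0 ≤ t) : ‖g' t‖ ≤ ∫ s in (0:ℝ)..t, ‖F s‖ := by
  have hgc : Causal g' := deriv_zero_of_causal hg (fun t ht => by simp [hv0 t ht])
  set P : ℝ → H := fun s => ∫ τ in (0:ℝ)..s, v τ with hP
  set Q : ℝ → M := fun s => ∫ τ in (0:ℝ)..s, F τ with hQ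
  have hPd : ∀ s, HasDerivAt P (v s) s := fun s =>
    intervalIntegral.integral_hasDerivAt_right (hv.intervalIntegrable _ _)
      hv.aestronglyMeasurable.stronglyMeasurableAtFilter hv.continuousAt
  have hQd : ∀ s, HasDerivAt Q (F s) s := fun s =>
    intervalIntegral.integral_hasDerivAt_right (hF.intervalIntegrable _ _)
      hF.aestronglyMeasurable.stronglyMeasurableAtFilter hF.continuousAt
  have hweak : ∀ s w, ⟪g' s, J w⟫ + ⟪A (P s), A w⟫ = ⟪Q s, J w⟫ := by
    intro s w
    set φ : ℝ → ℝ := fun s => ⟪g' s, J w⟫ + ⟪A (P s), A w⟫ - ⟪Q s, J w⟫ with hφ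
    have hd : ∀ s, HasDerivAt φ 0 s := by
      intro s
      have h1 := (hg' s).inner ℝ (hasDerivAt_const s (J w))
      have h2 := (A.hasFDerivAt.comp_hasDerivAt s (hPd s)).inner ℝ (hasDerivAt_const s (A w))
      have h3 := (hQd s).inner ℝ (hasDerivAt_const s (J w))
      have h4 := (h1.add h2).sub h3
      refine HasDerivAt.congr_deriv h4 ?_
      have := hw s w
      simp only [inner_zero_right, zero_add]
      linarith
    have hconst := is_const_of_deriv_eq_zero (fun s => (hd s).differentiableAt)
      (fun s => (hd s).deriv) s 0
    have h0 : φ 0 = 0 := by simp [hφ, hgc 0 le_rfl, hP, hQ]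
    rw [h0] at hconst
    simp only [hφ] at hconst
    linarith
  have hPc : Causal P := by
    intro s hs
    simp only [hP]
    rw [intervalIntegral.integral_congr (g := fun _ => (0:H))]
    · simp
    · intro x hx
      rw [Set.uIcc_of_ge hs] at hx
      exact hv0 x hx.2
  have key : ∀ h > 0, ‖dquot h (fun τ => J (v τ)) t‖ ≤ ∫ s in (0:ℝ)..t, ‖F s‖ := by
    intro h hh
    set G : ℝ → M := dquot h (fun τ => J (v τ)) with hG
    set vh : ℝ → H := dquot h P with hvh
    set Fh : ℝ → M := dquot h Q with hFh
    have hFhc : Continuous Fh :=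
      dq_continuous (continuous_iff_continuousAt.2 fun s => (hQd s).continuousAt) h
    have hwh : ∀ s w, ⟪dquot h g' s, J w⟫ + ⟪A (vh s), A w⟫ = ⟪Fh s, J w⟫ := by
      intro s w
      simp only [hvh, hFh, dquot, map_smul, map_sub, inner_smul_left, inner_sub_left]
      have e1 := hweak s w
      have e2 := hweak (s - h) w
      simp only [RCLike.conj_to_real]
      rw [← e1, ← e2]; ring
    set N : ℝ → ℝ := fun s => ‖G s‖ ^ 2 + ‖A (vh s)‖ ^ 2 with hN
    have hNd : ∀ s, HasDerivAt N (2 * ⟪Fh s, G s⟫) s := by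
      intro s
      have h1 := (dq_hasDerivAt hg h s).norm_sq
      have h2 := (A.hasFDerivAt.comp_hasDerivAt s (dq_hasDerivAt hPd h s)).norm_sq
      have h3 := h1.add h2
      refine HasDerivAt.congr_deriv h3 ?_
      have e := hwh s (dquot h v s)
      rw [← dq_clm] at e
      rw [← mul_add, real_inner_comm (dquot h g' s)]
      exact congrArg (2 * ·) e
    have hNnn : ∀ s, 0 ≤ N s := fun s => by positivity
    have hN0 : N 0 = 0 := by
      have e1 : G 0 = 0 := dq_causal (fun t ht => by simp [hv0 t ht]) hh.le 0 le_rfl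
      have e2 : vh 0 = 0 := dq_causal hPc hh.le 0 le_rfl
      simp [hN, e1, e2]
    have hFle : ∫ s in (0:ℝ)..t, ‖Fh s‖ ≤ ∫ s in (0:ℝ)..t, ‖F s‖ :=
      (Prim.of_deriv hQd hF (fun t ht => hF0 t ht.le)).int_dquot_le hh ht
    refine le_trans ?_ hFle
    refine le_of_forall_pos_le_add ?_
    intro ε hε
    set ψ : ℝ → ℝ := fun s => (∫ τ in (0:ℝ)..s, ‖Fh τ‖) - Real.sqrt (N s + ε ^ 2) with hψ
    have hpos : ∀ s, 0 < N s + ε ^ 2 := fun s => by have := hNnn s; positivity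
    have hψd : ∀ s, HasDerivAt ψ
        (‖Fh s‖ - (2 * ⟪Fh s, G s⟫) / (2 * Real.sqrt (N s + ε ^ 2))) s := by
      intro s
      refine HasDerivAt.sub ?_ ?_
      · exact intervalIntegral.integral_hasDerivAt_right (hFhc.norm.intervalIntegrable _ _)
          hFhc.norm.aestronglyMeasurable.stronglyMeasurableAtFilter hFhc.norm.continuousAt
      · exact ((hNd s).add_const _).sqrt (hpos s).ne'
    have hmono : Monotone ψ := by
      apply monotone_of_deriv_nonneg (fun s => (hψd s).differentiableAt)
      intro s
      rw [(hψd s).deriv, sub_nonneg, div_le_iff₀ (by have := Real.sqrt_pos.2 (hpos s); positivity)]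
      have e1 : ⟪Fh s, G s⟫ ≤ ‖Fh s‖ * ‖G s‖ := real_inner_le_norm _ _
      have e2 : ‖G s‖ ≤ Real.sqrt (N s + ε ^ 2) := by
        apply Real.le_sqrt_of_sq_le
        simp only [hN]
        nlinarith [sq_nonneg ‖A (vh s)‖, sq_nonneg ε]
      have e3 := mul_le_mul_of_nonneg_left e2 (norm_nonneg (Fh s))
      linarith
    have h1 := hmono ht
    have h2 : ψ 0 = -ε := by simp [hψ, hN0, Real.sqrt_sq hε.le]
    have h3 : ‖G t‖ ≤ Real.sqrt (N t + ε ^ 2) := by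
      apply Real.le_sqrt_of_sq_le
      simp only [hN]
      nlinarith [sq_nonneg ‖A (vh t)‖, sq_nonneg ε]
    rw [h2] at h1
    simp only [hψ] at h1
    linarith
  refine le_of_tendsto (dq_tendsto (hg t)).norm ?_
  filter_upwards [self_mem_nhdsWithin] with h hh
  exact key h hh

/-! ### Discrete energy estimate -/

/-- Discrete energy (square root). -/
def dEn {H M S : Type*} [NormedAddCommGroup H] [NormedSpace ℝ H]
    [NormedAddCommGroup M] [InnerProductSpace ℝ M]
    [NormedAddCommGroup S] [InnerProductSpace ℝ S]
    (J : H →L[ℝ] M) (A : H →L[ℝ] S) (k : ℝ) (E : ℝ → H) (t : ℝ) : ℝ :=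
  Real.sqrt (‖J (dquot k E t)‖ ^ 2 + ‖A (amean k E t)‖ ^ 2)

theorem disc_step {H M S : Type*} [NormedAddCommGroup H] [NormedSpace ℝ H]
    [NormedAddCommGroup M] [InnerProductSpace ℝ M]
    [NormedAddCommGroup S] [InnerProductSpace ℝ S]
    (J : H →L[ℝ] M) (A : H →L[ℝ] S) (V : Submodule ℝ H) (k : ℝ) (hk : 0 < k) (E : ℝ → H)
    (hV : ∀ t, E t ∈ V) (r : M) (t : ℝ)
    (hw : ∀ w ∈ V, ⟪J (dquot k (dquot k E) t), J w⟫ + ⟪A (amean k (amean k E) t), A w⟫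
      = ⟪r, J w⟫) :
    dEn J A k E t ≤ dEn J A k E (t - k) + k * ‖r‖ := by
  set a := dEn J A k E t with ha
  set b := dEn J A k E (t - k) with hb
  have ha0 : 0 ≤ a := Real.sqrt_nonneg _
  have hb0 : 0 ≤ b := Real.sqrt_nonneg _
  have ha2 : a ^ 2 = ‖J (dquot k E t)‖ ^ 2 + ‖A (amean k E t)‖ ^ 2 := Real.sq_sqrt (by positivity)
  have hb2 : b ^ 2 = ‖J (dquot k E (t - k))‖ ^ 2 + ‖A (amean k E (t - k))‖ ^ 2 :=
    Real.sq_sqrt (by positivity)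
  have hJa : ‖J (dquot k E t)‖ ≤ a :=
    abs_le_of_sq_le_sq' (by nlinarith [sq_nonneg ‖A (amean k E t)‖]) ha0 |>.2
  have hJb : ‖J (dquot k E (t - k))‖ ≤ b :=
    abs_le_of_sq_le_sq' (by nlinarith [sq_nonneg ‖A (amean k E (t - k))‖]) hb0 |>.2
  have hwV : dquot k E t + dquot k E (t - k) ∈ V := by
    unfold dquot
    exact V.add_mem (V.smul_mem _ (V.sub_mem (hV _) (hV _)))
      (V.smul_mem _ (V.sub_mem (hV _) (hV _)))
  have e := hw _ hwV
  have e1 : k • J (dquot k (dquot k E) t) = J (dquot k E t) - J (dquot k E (t - k)) := by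
    conv_lhs => rw [dquot]
    rw [map_smul, smul_smul, mul_inv_cancel₀ hk.ne', one_smul, map_sub]
  have e2 : (2:ℝ) • A (amean k (amean k E) t) = A (amean k E t) + A (amean k E (t - k)) := by
    conv_lhs => rw [amean]
    rw [map_smul, smul_smul, mul_inv_cancel₀ (by norm_num), one_smul, map_add]
  have e3 : k • A (dquot k E t + dquot k E (t - k))
      = (2:ℝ) • (A (amean k E t) - A (amean k E (t - k))) := by
    rw [← map_smul, ← map_sub, ← map_smul]
    congr 1
    unfold dquot amean
    rw [smul_add, smul_smul, smul_smul, mul_inv_cancel₀ hk.ne', ← smul_sub, smul_smul,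
      mul_inv_cancel₀ (by norm_num)]
    simp only [one_smul]
    abel
  have key : a ^ 2 - b ^ 2 = k * ⟪r, J (dquot k E t + dquot k E (t - k))⟫ := by
    rw [← e, mul_add]
    have f1 : k * ⟪J (dquot k (dquot k E) t), J (dquot k E t + dquot k E (t - k))⟫
        = ‖J (dquot k E t)‖ ^ 2 - ‖J (dquot k E (t - k))‖ ^ 2 := by
      rw [← real_inner_smul_left, e1, map_add, inner_sub_left, inner_add_right, inner_add_right,
        real_inner_self_eq_norm_sq, real_inner_self_eq_norm_sq,
        real_inner_comm (J (dquot k E t)) (J (dquot k E (t - k)))]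
      ring
    have f2 : k * ⟪A (amean k (amean k E) t), A (dquot k E t + dquot k E (t - k))⟫
        = ‖A (amean k E t)‖ ^ 2 - ‖A (amean k E (t - k))‖ ^ 2 := by
      rw [← real_inner_smul_right, e3, real_inner_smul_right, ← real_inner_smul_left, e2,
        inner_sub_right, inner_add_left, inner_add_left,
        real_inner_self_eq_norm_sq, real_inner_self_eq_norm_sq,
        real_inner_comm (A (amean k E t)) (A (amean k E (t - k)))]
      ring
    rw [f1, f2, ha2, hb2]; ring
  have hle : ⟪r, J (dquot k E t + dquot k E (t - k))⟫ ≤ ‖r‖ * (a + b) := by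
    refine (real_inner_le_norm _ _).trans ?_
    gcongr
    rw [map_add]
    exact (norm_add_le _ _).trans (add_le_add hJa hJb)
  have h2 : (a - b) * (a + b) ≤ k * ‖r‖ * (a + b) := by
    have := mul_le_mul_of_nonneg_left hle hk.le
    nlinarith
  rcases (add_nonneg ha0 hb0).eq_or_lt with h0 | h0
  · have : 0 ≤ k * ‖r‖ := by positivity
    linarith
  · have := le_of_mul_le_mul_right h2 h0
    linarith

theorem disc_energy {H M S : Type*} [NormedAddCommGroup H] [NormedSpace ℝ H]
    [NormedAddCommGroup M] [InnerProductSpace ℝ M]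
    [NormedAddCommGroup S] [InnerProductSpace ℝ S]
    (J : H →L[ℝ] M) (A : H →L[ℝ] S) (V : Submodule ℝ H) (k : ℝ) (hk : 0 < k) (E : ℝ → H)
    (hV : ∀ t, E t ∈ V) (hE0 : Causal E) (R : ℝ → M)
    (hw : ∀ t, ∀ w ∈ V, ⟪J (dquot k (dquot k E) t), J w⟫ + ⟪A (amean k (amean k E) t), A w⟫
      = ⟪R t, J w⟫) (K T : ℝ)
    (hR : ∀ s ≤ T, ‖R s‖ ≤ K * k ^ 2) (hR0 : ∀ s ≤ T, 0 ≤ s → s ≤ k → ‖R s‖ ≤ K * k * s) :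
    ∀ n : ℕ, ∀ t ≤ T, 0 ≤ t → t ≤ n * k → dEn J A k E t ≤ K * k ^ 2 * t := by
  have h0 : ∀ t ≤ 0, dEn J A k E t = 0 := by
    intro t ht
    simp [dEn, dquot, amean, hE0 t ht, hE0 (t - k) (by linarith)]
  intro n
  induction n with
  | zero =>
    intro t _ h1 h2
    have : t = 0 := le_antisymm (by simpa using h2) h1
    subst this
    simp [h0]
  | succ n ih =>
    intro t hT h1 h2
    have hs := disc_step J A V k hk E hV (R t) t (hw t)
    rcases le_total t k with h | h
    · rw [h0 (t - k) (by linarith)] at hs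
      have := mul_le_mul_of_nonneg_left (hR0 t hT h1 h) hk.le
      linarith
    · have i := ih (t - k) (by linarith) (by linarith) (by push_cast at h2; linarith)
      have := mul_le_mul_of_nonneg_left (hR t hT) hk.le
      nlinarith

/-! ### Consistency error -/

theorem taylor_bound {M : Type*} [NormedAddCommGroup M] [NormedSpace ℝ M]
    {f f' f'' : ℝ → M} (hf : ∀ t, HasDerivAt f (f' t) t) (hf' : ∀ t, HasDerivAt f' (f'' t) t)
    (h0 : f 0 = 0) (h0' : f' 0 = 0) {B s : ℝ} (hs : 0 ≤ s)
    (hB : ∀ τ, 0 ≤ τ → τ ≤ s → ‖f'' τ‖ ≤ B) : ‖f s‖ ≤ B * s ^ 2 := by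
  have hB0 : 0 ≤ B := (norm_nonneg _).trans (hB 0 le_rfl hs)
  have h1 : ∀ τ, 0 ≤ τ → τ ≤ s → ‖f' τ‖ ≤ B * s := by
    intro τ h1 h2
    have := (convex_Icc (0:ℝ) s).norm_image_sub_le_of_norm_hasDerivWithin_le
      (f := f') (f' := f'') (fun x _ => (hf' x).hasDerivWithinAt)
      (fun x hx => hB x hx.1 hx.2) ⟨le_rfl, hs⟩ ⟨h1, h2⟩
    rw [h0', sub_zero, sub_zero, Real.norm_of_nonneg h1] at this
    exact this.trans (by gcongr)
  have := (convex_Icc (0:ℝ) s).norm_image_sub_le_of_norm_hasDerivWithin_le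
      (f := f) (f' := f') (fun x _ => (hf x).hasDerivWithinAt)
      (fun x hx => h1 x hx.1 hx.2) ⟨le_rfl, hs⟩ ⟨hs, le_rfl⟩
  rw [h0, sub_zero, sub_zero, Real.norm_of_nonneg hs] at this
  linarith [this]

theorem resid_bound {M : Type*} [NormedAddCommGroup M] [NormedSpace ℝ M]
    {g g' g'' : ℝ → M} (hg : ∀ t, HasDerivAt g (g' t) t) (hg' : ∀ t, HasDerivAt g' (g'' t) t)
    {K T k : ℝ} (hk : 0 < k)
    (hK : ∀ h > 0, ∀ s ≤ T, ‖dquot h (dquot h g'') s‖ ≤ K) :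
    ∀ s ≤ T, ‖dquot k (dquot k g) s - amean k (amean k g'') s‖ ≤ (2 * K) * k ^ 2 := by
  intro s hs
  have hK0 : 0 ≤ K := (norm_nonneg _).trans (hK k hk s hs)
  set c := s - k with hc
  have hsd : ∀ τ, 0 ≤ τ → τ ≤ k → ‖g'' (c + τ) + g'' (c - τ) - (2:ℝ) • g'' c‖ ≤ K * k ^ 2 := by
    intro τ h1 h2
    rcases h1.eq_or_lt with h | h
    · subst h
      simp only [add_zero, sub_zero, two_smul, sub_self, norm_zero]
      positivity
    · have := hK τ h (c + τ) (by linarith)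
      have e : g'' (c + τ) + g'' (c - τ) - (2:ℝ) • g'' c
          = τ ^ 2 • dquot τ (dquot τ g'') (c + τ) := by
        unfold dquot
        rw [← smul_sub, smul_smul, smul_smul]
        have : τ ^ 2 * (τ⁻¹ * τ⁻¹) = 1 := by field_simp
        rw [mul_assoc] at *
        rw [this, one_smul, add_sub_cancel_right, two_smul]
        abel
      rw [e, norm_smul, Real.norm_of_nonneg (by positivity), mul_comm]
      gcongr
  have t1 := taylor_bound (f := fun τ => g (c + τ) + g (c - τ) - (2:ℝ) • g c - τ ^ 2 • g'' c)
    (f' := fun τ => g' (c + τ) - g' (c - τ) - (2 * τ) • g'' c)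
    (f'' := fun τ => g'' (c + τ) + g'' (c - τ) - (2:ℝ) • g'' c) (s := k) (B := K * k ^ 2)
    (by
      intro t
      have h1 := (hg (c + t)).comp_const_add c t
      have h2 := (hg (c - t)).comp_const_sub c t
      have h3 := ((hasDerivAt_id t).pow 2).smul_const (g'' c)
      refine HasDerivAt.congr_deriv (((h1.add h2).sub_const ((2:ℝ) • g c)).sub h3) ?_
      simp [sub_eq_add_neg])
    (by
      intro t
      have h1 := (hg' (c + t)).comp_const_add c t
      have h2 := (hg' (c - t)).comp_const_sub c t
      have h3 := ((hasDerivAt_id t).const_mul 2).smul_const (g'' c)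
      refine HasDerivAt.congr_deriv ((h1.sub h2).sub h3) ?_
      simp)
    (by simp [two_smul]) (by simp) hk.le hsd
  have t2 := hsd k hk.le le_rfl
  have e : dquot k (dquot k g) s - amean k (amean k g'') s
      = (k ^ 2)⁻¹ • (g (c + k) + g (c - k) - (2:ℝ) • g c - k ^ 2 • g'' c)
        - (4⁻¹ : ℝ) • (g'' (c + k) + g'' (c - k) - (2:ℝ) • g'' c) := by
    have hs' : c + k = s := by rw [hc]; ring
    rw [hs']
    unfold dquot amean
    rw [← hc]
    have hk' : k ≠ 0 := hk.ne'
    match_scalars <;> field_simp <;> ring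
  rw [e]
  refine (norm_sub_le _ _).trans ?_
  rw [norm_smul, norm_smul, Real.norm_of_nonneg (by positivity),
    Real.norm_of_nonneg (by norm_num)]
  have h1 : (k ^ 2)⁻¹ * ‖g (c + k) + g (c - k) - (2:ℝ) • g c - k ^ 2 • g'' c‖
      ≤ (k ^ 2)⁻¹ * (K * k ^ 2 * k ^ 2) := by gcongr
  have h2 : (k ^ 2)⁻¹ * (K * k ^ 2 * k ^ 2) = K * k ^ 2 := by field_simp
  have h3 : 0 ≤ K * k ^ 2 := by positivity
  linarith

theorem resid_bound0 {M : Type*} [NormedAddCommGroup M] [NormedSpace ℝ M]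
    {g g' g'' : ℝ → M} (hg : ∀ t, HasDerivAt g (g' t) t) (hg' : ∀ t, HasDerivAt g' (g'' t) t)
    (hg0 : Causal g) {K T k : ℝ} (hk : 0 < k)
    (hK : ∀ h > 0, ∀ s ≤ T, ‖dquot h (dquot h g'') s‖ ≤ K) :
    ∀ s ≤ T, 0 ≤ s → s ≤ k →
      ‖dquot k (dquot k g) s - amean k (amean k g'') s‖ ≤ (2 * K) * k * s := by
  intro s hs h0 hsk
  have hK0 : 0 ≤ K := (norm_nonneg _).trans (hK k hk s hs)
  have hg0' : Causal g' := deriv_zero_of_causal hg hg0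
  have hg0'' : Causal g'' := deriv_zero_of_causal hg' hg0'
  have hb : ∀ τ, 0 ≤ τ → τ ≤ s → ‖g'' τ‖ ≤ K * s ^ 2 := by
    intro τ h1 h2
    rcases h1.eq_or_lt with h | h
    · subst h
      rw [hg0'' 0 le_rfl, norm_zero]
      positivity
    · have := hK τ h τ (by linarith)
      have e : g'' τ = τ ^ 2 • dquot τ (dquot τ g'') τ := by
        unfold dquot
        rw [sub_self, hg0'' 0 le_rfl, hg0'' (0 - τ) (by linarith), sub_zero, sub_zero, smul_zero,
          sub_zero, smul_smul, smul_smul]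
        have : τ ^ 2 * τ⁻¹ * τ⁻¹ = 1 := by field_simp
        rw [this, one_smul]
      rw [e, norm_smul, Real.norm_of_nonneg (by positivity), mul_comm]
      gcongr
  have t1 := taylor_bound hg hg' (hg0 0 le_rfl) (hg0' 0 le_rfl) h0 hb
  have t2 := hb s h0 le_rfl
  have e : dquot k (dquot k g) s - amean k (amean k g'') s
      = (k ^ 2)⁻¹ • g s - (4⁻¹ : ℝ) • g'' s := by
    unfold dquot amean
    rw [hg0 (s - k) (by linarith), hg0 (s - k - k) (by linarith), hg0'' (s - k) (by linarith),
      hg0'' (s - k - k) (by linarith)]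
    have hk' : k ≠ 0 := hk.ne'
    match_scalars <;> field_simp <;> ring
  rw [e]
  refine (norm_sub_le _ _).trans ?_
  rw [norm_smul, norm_smul, Real.norm_of_nonneg (by positivity),
    Real.norm_of_nonneg (by norm_num)]
  have h1 : (k ^ 2)⁻¹ * ‖g s‖ ≤ (k ^ 2)⁻¹ * (K * s ^ 2 * k ^ 2) := by
    gcongr
    exact t1.trans (by gcongr)
  have h2 : (k ^ 2)⁻¹ * (K * s ^ 2 * k ^ 2) = K * s ^ 2 := by field_simp
  have h3 : 0 ≤ K * s ^ 2 := by positivity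
  have h4 : K * s ^ 2 ≤ K * k * s := by
    have : K * s * s ≤ K * s * k := by gcongr
    linarith
  linarith

/-! ### Lifting of the data -/

theorem riesz_aux {V M S : Type*} [NormedAddCommGroup V] [NormedSpace ℝ V] [CompleteSpace V]
    [NormedAddCommGroup M] [InnerProductSpace ℝ M] [CompleteSpace M]
    [NormedAddCommGroup S] [InnerProductSpace ℝ S] [CompleteSpace S]
    (J : V →L[ℝ] M) (A : V →L[ℝ] S) (c : ℝ) (hc : 0 < c)
    (hco : ∀ v, c * ‖v‖ ^ 2 ≤ ‖J v‖ ^ 2 + ‖A v‖ ^ 2) (φ : V →L[ℝ] ℝ) :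
    ∃ v, ∀ w, ⟪J v, J w⟫ + ⟪A v, A w⟫ = φ w := by
  set T : V →L[ℝ] WithLp 2 (M × S) :=
    ((WithLp.prodContinuousLinearEquiv 2 ℝ M S).symm : (M × S) →L[ℝ] WithLp 2 (M × S)).comp
      (J.prod A) with hT
  have hTin : ∀ v w, ⟪T v, T w⟫ = ⟪J v, J w⟫ + ⟪A v, A w⟫ := by
    intro v w
    rw [WithLp.prod_inner_apply]
    rfl
  have hTn : ∀ v, ‖T v‖ ^ 2 = ‖J v‖ ^ 2 + ‖A v‖ ^ 2 := by
    intro v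
    rw [← real_inner_self_eq_norm_sq, hTin, real_inner_self_eq_norm_sq,
      real_inner_self_eq_norm_sq]
  have hanti : AntilipschitzWith (Real.toNNReal (Real.sqrt c)⁻¹) T := by
    apply ContinuousLinearMap.antilipschitz_of_bound
    intro v
    have hs : 0 < Real.sqrt c := Real.sqrt_pos.2 hc
    rw [Real.coe_toNNReal _ (inv_nonneg.2 hs.le), le_inv_mul_iff₀ hs]
    apply abs_le_of_sq_le_sq' _ (norm_nonneg _) |>.2
    rw [mul_pow, Real.sq_sqrt hc.le, hTn]
    exact hco v
  have hcl : IsClosed (Set.range T) := hanti.isClosed_range T.uniformContinuous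
  set e := T.equivRange hanti.injective hcl with he
  have : CompleteSpace T.range := by
    have : IsClosed (T.range : Set (WithLp 2 (M × S))) := by
      rw [LinearMap.coe_range]
      exact hcl
    exact this.completeSpace_coe
  set ψ : T.range →L[ℝ] ℝ := φ.comp (e.symm : T.range →L[ℝ] V) with hψ
  set z := (InnerProductSpace.toDual ℝ T.range).symm ψ with hz
  refine ⟨e.symm z, fun w => ?_⟩
  have h1 : ⟪z, e w⟫ = ψ (e w) := InnerProductSpace.toDual_symm_apply
  rw [← hTin]
  have h2 : ∀ x, ((e x : T.range) : WithLp 2 (M × S)) = T x := fun x => rfl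
  rw [← h2, ← h2, e.apply_symm_apply, ← Submodule.coe_inner, h1]
  simp [hψ]

theorem lift_exists {H M S Hp Hm : Type*} [NormedAddCommGroup H] [NormedSpace ℝ H]
    [CompleteSpace H]
    [NormedAddCommGroup M] [InnerProductSpace ℝ M] [CompleteSpace M]
    [NormedAddCommGroup S] [InnerProductSpace ℝ S] [CompleteSpace S]
    [NormedAddCommGroup Hp] [NormedSpace ℝ Hp] [NormedAddCommGroup Hm] [NormedSpace ℝ Hm]
    (J : H →L[ℝ] M) (A : H →L[ℝ] S) (ρ : Hm →L[ℝ] H →L[ℝ] ℝ) (c L : ℝ) (hc : 0 < c) (hL : 0 ≤ L)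
    (hco : ∀ v, c * ‖v‖ ^ 2 ≤ ‖J v‖ ^ 2 + ‖A v‖ ^ 2)
    (K : Submodule ℝ (Hp × H)) (hK : IsClosed {w : H | ((0 : Hp), w) ∈ K})
    (hl : ∀ a, ∃ p, (a, p) ∈ K ∧ ‖p‖ ≤ L * ‖a‖) :
    ∃ l : (Hp × Hm) →L[ℝ] H, (∀ x, (x.1, l x) ∈ K) ∧
      (∀ x w, ((0 : Hp), w) ∈ K → ⟪J (l x), J w⟫ + ⟪A (l x), A w⟫ = ρ x.2 w) ∧
      ∀ x, ‖l x‖ ≤ (L + c⁻¹ * (‖ρ‖ + (‖J‖ ^ 2 + ‖A‖ ^ 2) * L)) * ‖x‖ := by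
  set V : Submodule ℝ H := K.comap (LinearMap.inr ℝ Hp H) with hV
  have hmem : ∀ w, w ∈ V ↔ ((0 : Hp), w) ∈ K := fun w => Iff.rfl
  have : CompleteSpace V := by
    have : IsClosed (V : Set H) := hK
    exact this.completeSpace_coe
  have hex : ∀ x : Hp × Hm, ∃ p : H, (x.1, p) ∈ K ∧
      (∀ w, ((0 : Hp), w) ∈ K → ⟪J p, J w⟫ + ⟪A p, A w⟫ = ρ x.2 w) ∧
      ‖p‖ ≤ (L + c⁻¹ * (‖ρ‖ + (‖J‖ ^ 2 + ‖A‖ ^ 2) * L)) * ‖x‖ := by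
    intro x
    obtain ⟨p, hp, hpn⟩ := hl x.1
    set φ : H →L[ℝ] ℝ := ρ x.2 - ((innerSL ℝ (J p)).comp J + (innerSL ℝ (A p)).comp A) with hφ
    have hφa : ∀ w, φ w = ρ x.2 w - (⟪J p, J w⟫ + ⟪A p, A w⟫) := fun w => by simp [hφ]
    obtain ⟨v, hv⟩ := riesz_aux (J.comp V.subtypeL) (A.comp V.subtypeL) c hc
      (fun v => hco v) (φ.comp V.subtypeL)
    have hpx : ‖p‖ ≤ L * ‖x‖ := hpn.trans (by gcongr; exact norm_fst_le x)
    have hφn : ‖φ (v : H)‖ ≤ (‖ρ‖ + (‖J‖ ^ 2 + ‖A‖ ^ 2) * L) * ‖x‖ * ‖(v : H)‖ := by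
      rw [hφa]
      have h1 : ‖ρ x.2 (v : H)‖ ≤ ‖ρ‖ * ‖x‖ * ‖(v : H)‖ := by
        refine (ρ.le_opNorm₂ _ _).trans ?_
        gcongr
        exact norm_snd_le x
      have h2 : ‖⟪J p, J (v : H)⟫‖ ≤ ‖J‖ ^ 2 * L * ‖x‖ * ‖(v : H)‖ := by
        refine (norm_inner_le_norm _ _).trans ?_
        calc ‖J p‖ * ‖J (v : H)‖ ≤ (‖J‖ * (L * ‖x‖)) * (‖J‖ * ‖(v : H)‖) := by
              gcongr
              · exact (J.le_opNorm p).trans (by gcongr)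
              · exact J.le_opNorm _
          _ = _ := by ring
      have h3 : ‖⟪A p, A (v : H)⟫‖ ≤ ‖A‖ ^ 2 * L * ‖x‖ * ‖(v : H)‖ := by
        refine (norm_inner_le_norm _ _).trans ?_
        calc ‖A p‖ * ‖A (v : H)‖ ≤ (‖A‖ * (L * ‖x‖)) * (‖A‖ * ‖(v : H)‖) := by
              gcongr
              · exact (A.le_opNorm p).trans (by gcongr)
              · exact A.le_opNorm _
          _ = _ := by ring
      calc _ ≤ _ := norm_sub_le _ _
        _ ≤ _ := add_le_add h1 ((norm_add_le _ _).trans (add_le_add h2 h3))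
        _ = _ := by ring
    have hvn : ‖(v : H)‖ ≤ c⁻¹ * (‖ρ‖ + (‖J‖ ^ 2 + ‖A‖ ^ 2) * L) * ‖x‖ := by
      have h1 := hco (v : H)
      have h2 : ‖J (v : H)‖ ^ 2 + ‖A (v : H)‖ ^ 2 = φ (v : H) := by
        have := hv v
        rw [← real_inner_self_eq_norm_sq, ← real_inner_self_eq_norm_sq]
        exact this
      have h3 := le_of_abs_le hφn
      rcases (norm_nonneg (v : H)).eq_or_lt with h0 | h0
      · rw [← h0]; positivity
      · have h4 : c * ‖(v : H)‖ ≤ (‖ρ‖ + (‖J‖ ^ 2 + ‖A‖ ^ 2) * L) * ‖x‖ := by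
          apply le_of_mul_le_mul_right _ h0
          nlinarith
        rw [mul_assoc, le_inv_mul_iff₀ hc]
        exact h4
    refine ⟨p + v, ?_, ?_, ?_⟩
    · have := K.add_mem hp v.2
      simpa using this
    · intro w hw
      have := hv ⟨w, hw⟩
      have h1 : ⟪J (v : H), J w⟫ + ⟪A (v : H), A w⟫ = φ w := this
      rw [hφa] at h1
      rw [map_add, map_add, inner_add_left, inner_add_left]
      linarith
    · refine (norm_add_le _ _).trans ?_
      rw [add_mul]
      exact add_le_add hpx hvn
  have huniq : ∀ p, ((0 : Hp), p) ∈ K →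
      (∀ w, ((0 : Hp), w) ∈ K → ⟪J p, J w⟫ + ⟪A p, A w⟫ = 0) → p = 0 := by
    intro p hp h
    have h1 := h p hp
    rw [real_inner_self_eq_norm_sq, real_inner_self_eq_norm_sq] at h1
    have h2 := hco p
    rw [h1] at h2
    have h3 : ‖p‖ ^ 2 ≤ 0 := by
      by_contra hh
      push Not at hh
      have := mul_pos hc hh
      linarith
    have h4 : ‖p‖ ^ 2 = 0 := le_antisymm h3 (by positivity)
    simpa using h4
  choose l hl1 hl2 hl3 using hex
  let l0 : (Hp × Hm) →ₗ[ℝ] H :=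
    { toFun := l
      map_add' := by
        intro x y
        rw [← sub_eq_zero]
        apply huniq
        · have := K.sub_mem (hl1 (x + y)) (K.add_mem (hl1 x) (hl1 y))
          simpa using this
        · intro w hw
          have e1 := hl2 (x + y) w hw
          have e2 := hl2 x w hw
          have e3 := hl2 y w hw
          simp only [map_sub, map_add, inner_sub_left, inner_add_left, Prod.snd_add,
            _root_.add_apply] at *
          linarith
      map_smul' := by
        intro r x
        rw [RingHom.id_apply, ← sub_eq_zero]
        apply huniq
        · have := K.sub_mem (hl1 (r • x)) (K.smul_mem r (hl1 x))
          simpa using this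
        · intro w hw
          have e1 := hl2 (r • x) w hw
          have e2 := hl2 x w hw
          simp only [map_sub, map_smul, inner_sub_left, real_inner_smul_left, Prod.smul_snd,
            _root_.smul_apply, smul_eq_mul] at *
          linear_combination e1 - r * e2 }
  exact ⟨l0.mkContinuous _ hl3, hl1, hl2, hl3⟩

/-! ### Abstract semidiscrete solutions -/

/-- Abstract semidiscrete solution. -/
structure Sol {H M S Hp Hm : Type*} [NormedAddCommGroup H] [NormedSpace ℝ H]
    [NormedAddCommGroup M] [InnerProductSpace ℝ M]
    [NormedAddCommGroup S] [InnerProductSpace ℝ S]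
    [NormedAddCommGroup Hp] [NormedSpace ℝ Hp] [NormedAddCommGroup Hm] [NormedSpace ℝ Hm]
    (J : H →L[ℝ] M) (A : H →L[ℝ] S) (ρ : Hm →L[ℝ] H →L[ℝ] ℝ) (K : Submodule ℝ (Hp × H))
    (b0 : ℝ → Hp) (b1 : ℝ → Hm) (U : ℝ → H) (g' g'' : ℝ → M) : Prop where
  mem : ∀ t, (b0 t, U t) ∈ K
  cont : Continuous U
  caus : Causal U
  d1 : ∀ t, HasDerivAt (fun τ => J (U τ)) (g' t) t
  d2 : ∀ t, HasDerivAt g' (g'' t) t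
  weak : ∀ t w, ((0 : Hp), w) ∈ K → ⟪g'' t, J w⟫ + ⟪A (U t), A w⟫ = ρ (b1 t) w

theorem Sol.dquot {H M S Hp Hm : Type*} [NormedAddCommGroup H] [NormedSpace ℝ H]
    [NormedAddCommGroup M] [InnerProductSpace ℝ M]
    [NormedAddCommGroup S] [InnerProductSpace ℝ S]
    [NormedAddCommGroup Hp] [NormedSpace ℝ Hp] [NormedAddCommGroup Hm] [NormedSpace ℝ Hm]
    {J : H →L[ℝ] M} {A : H →L[ℝ] S} {ρ : Hm →L[ℝ] H →L[ℝ] ℝ} {K : Submodule ℝ (Hp × H)}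
    {b0 : ℝ → Hp} {b1 : ℝ → Hm} {U : ℝ → H} {g' g'' : ℝ → M}
    (hS : Sol J A ρ K b0 b1 U g' g'') {h : ℝ} (hh : 0 ≤ h) :
    Sol J A ρ K (_root_.dquot h b0) (_root_.dquot h b1) (_root_.dquot h U) (_root_.dquot h g')
      (_root_.dquot h g'') where
  mem t := K.smul_mem h⁻¹ (K.sub_mem (hS.mem t) (hS.mem (t - h)))
  cont := dq_continuous hS.cont h
  caus := dq_causal hS.caus hh
  d1 t := by
    have := dq_hasDerivAt hS.d1 h t
    refine this.congr_of_eventuallyEq (Eventually.of_forall fun s => ?_)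
    exact (dq_clm J U h s).symm
  d2 t := dq_hasDerivAt hS.d2 h t
  weak t w hw := by
    have e1 := hS.weak t w hw
    have e2 := hS.weak (t - h) w hw
    simp only [_root_.dquot, map_smul, map_sub, real_inner_smul_left, inner_sub_left,
      _root_.smul_apply, _root_.sub_apply, smul_eq_mul]
    rw [← e1, ← e2]; ring

theorem sol_bound {H M S Hp Hm : Type*} [NormedAddCommGroup H] [NormedSpace ℝ H]
    [CompleteSpace H]
    [NormedAddCommGroup M] [InnerProductSpace ℝ M] [CompleteSpace M]
    [NormedAddCommGroup S] [InnerProductSpace ℝ S]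
    [NormedAddCommGroup Hp] [NormedSpace ℝ Hp] [CompleteSpace Hp]
    [NormedAddCommGroup Hm] [NormedSpace ℝ Hm] [CompleteSpace Hm]
    {J : H →L[ℝ] M} {A : H →L[ℝ] S} {ρ : Hm →L[ℝ] H →L[ℝ] ℝ} {K : Submodule ℝ (Hp × H)}
    (hK : IsClosed {w : H | ((0 : Hp), w) ∈ K})
    (l : (Hp × Hm) →L[ℝ] H) (hl1 : ∀ x, (x.1, l x) ∈ K)
    (hl2 : ∀ x w, ((0 : Hp), w) ∈ K → ⟪J (l x), J w⟫ + ⟪A (l x), A w⟫ = ρ x.2 w)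
    (D : ℝ) (hD0 : 0 ≤ D) (hD : ∀ x, ‖l x‖ ≤ D * ‖x‖)
    {b0 b0' b0'' : ℝ → Hp} {b1 b1' b1'' : ℝ → Hm} {U : ℝ → H} {g' g'' : ℝ → M}
    (hS : Sol J A ρ K b0 b1 U g' g'') (h0 : Causal b0) (h1 : Causal b1)
    (h0d : ∀ t, HasDerivAt b0 (b0' t) t) (h0d' : ∀ t, HasDerivAt b0' (b0'' t) t)
    (h1d : ∀ t, HasDerivAt b1 (b1' t) t) (h1d' : ∀ t, HasDerivAt b1' (b1'' t) t)
    (h0c : Continuous b0'') (h1c : Continuous b1'') (t : ℝ) (ht : 0 ≤ t) :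
    ‖g' t‖ ≤ 2 * ‖J‖ * D * (((∫ s in (0:ℝ)..t, ‖b0 s‖) + ∫ s in (0:ℝ)..t, ‖b0'' s‖) +
      ((∫ s in (0:ℝ)..t, ‖b1 s‖) + ∫ s in (0:ℝ)..t, ‖b1'' s‖)) := by
  set V : Submodule ℝ H := K.comap (LinearMap.inr ℝ Hp H) with hV
  have hVc : CompleteSpace V := by
    have : IsClosed (V : Set H) := hK
    exact this.completeSpace_coe
  have h0' := deriv_zero_of_causal h0d h0
  have h0'' := deriv_zero_of_causal h0d' h0'
  have h1' := deriv_zero_of_causal h1d h1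
  have h1'' := deriv_zero_of_causal h1d' h1'
  have c0 : Continuous b0 := continuous_iff_continuousAt.2 fun s => (h0d s).continuousAt
  have c1 : Continuous b1 := continuous_iff_continuousAt.2 fun s => (h1d s).continuousAt
  set q : ℝ → H := fun s => l (b0 s, b1 s) with hq
  set q' : ℝ → H := fun s => l (b0' s, b1' s) with hq'
  set q'' : ℝ → H := fun s => l (b0'' s, b1'' s) with hq''
  have hqd : ∀ s, HasDerivAt q (q' s) s := fun s =>
    l.hasFDerivAt.comp_hasDerivAt s ((h0d s).prodMk (h1d s))
  have hqd' : ∀ s, HasDerivAt q' (q'' s) s := fun s =>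
    l.hasFDerivAt.comp_hasDerivAt s ((h0d' s).prodMk (h1d' s))
  have hqc : Continuous q := by fun_prop
  have hqc'' : Continuous q'' := by fun_prop
  have hvm : ∀ s, U s - q s ∈ V := by
    intro s
    have := K.sub_mem (hS.mem s) (hl1 (b0 s, b1 s))
    have e : (b0 s, U s) - ((b0 s, b1 s).1, l (b0 s, b1 s)) = ((0 : Hp), U s - q s) := by
      simp [hq]
    rw [e] at this
    exact this
  set v : ℝ → V := fun s => ⟨U s - q s, hvm s⟩ with hv
  have hqcaus : Causal q := by
    intro s hs
    simp only [hq, h0 s hs, h1 s hs]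
    exact map_zero l
  have hqcaus'' : Causal q'' := by
    intro s hs
    simp only [hq'', h0'' s hs, h1'' s hs]
    exact map_zero l
  have hFc : Continuous (fun s => J (q s - q'' s)) := by fun_prop
  have main := energy_cont (J.comp V.subtypeL) (A.comp V.subtypeL) v
    (fun s => g' s - J (q' s)) (fun s => g'' s - J (q'' s)) (fun s => J (q s - q'' s))
    (Continuous.subtype_mk (hS.cont.sub hqc) _)
    (fun s hs => by
      apply Subtype.ext
      simp [hv, hS.caus s hs, hqcaus s hs])
    (fun s => by
      have := (hS.d1 s).sub (J.hasFDerivAt.comp_hasDerivAt s (hqd s))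
      refine this.congr_of_eventuallyEq (Eventually.of_forall fun s => ?_)
      simp [hv])
    (fun s => (hS.d2 s).sub (J.hasFDerivAt.comp_hasDerivAt s (hqd' s)))
    hFc
    (fun s hs => by simp [hqcaus s hs, hqcaus'' s hs])
    (fun s w => by
      have e1 := hS.weak s w w.2
      have e2 := hl2 (b0 s, b1 s) w w.2
      simp only [hv, ContinuousLinearMap.comp_apply, Submodule.subtypeL_apply, map_sub,
        inner_sub_left, hq]
      simp only at e2
      linarith)
    t ht
  have hln : ∀ x : Hp × Hm, ‖J (l x)‖ ≤ ‖J‖ * D * (‖x.1‖ + ‖x.2‖) := by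
    intro x
    calc ‖J (l x)‖ ≤ ‖J‖ * ‖l x‖ := J.le_opNorm _
      _ ≤ ‖J‖ * (D * ‖x‖) := by gcongr; exact hD x
      _ ≤ ‖J‖ * (D * (‖x.1‖ + ‖x.2‖)) := by
          gcongr
          rw [Prod.norm_def]
          exact max_le_add_of_nonneg (norm_nonneg _) (norm_nonneg _)
      _ = _ := by ring
  have i0 := c0.norm.intervalIntegrable (μ := volume) 0 t
  have i1 := c1.norm.intervalIntegrable (μ := volume) 0 t
  have i0' := h0c.norm.intervalIntegrable (μ := volume) 0 t
  have i1' := h1c.norm.intervalIntegrable (μ := volume) 0 t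
  have hint : ∫ s in (0:ℝ)..t, ‖J (q s - q'' s)‖ ≤ ‖J‖ * D *
      (((∫ s in (0:ℝ)..t, ‖b0 s‖) + ∫ s in (0:ℝ)..t, ‖b0'' s‖) +
      ((∫ s in (0:ℝ)..t, ‖b1 s‖) + ∫ s in (0:ℝ)..t, ‖b1'' s‖)) := by
    rw [← intervalIntegral.integral_add i0 i0', ← intervalIntegral.integral_add i1 i1',
      ← intervalIntegral.integral_add (i0.add i0') (i1.add i1'),
      ← intervalIntegral.integral_const_mul]
    apply intervalIntegral.integral_mono_on ht (hFc.norm.intervalIntegrable _ _)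
    · exact (((i0.add i0').add (i1.add i1')).const_mul _)
    · intro s _
      have e1 := hln (b0 s, b1 s)
      have e2 := hln (b0'' s, b1'' s)
      rw [map_sub]
      refine (norm_sub_le _ _).trans ((add_le_add e1 e2).trans (le_of_eq ?_))
      ring
  have hb : ∀ {X : Type _} [NormedAddCommGroup X] [NormedSpace ℝ X] [CompleteSpace X]
      (b' b'' : ℝ → X), (∀ s, HasDerivAt b' (b'' s) s) → Continuous b'' → Causal b' →
      ‖b' t‖ ≤ ∫ s in (0:ℝ)..t, ‖b'' s‖ := by
    intro X _ _ _ b' b'' hd hc h0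
    have := intervalIntegral.integral_eq_sub_of_hasDerivAt (a := 0) (b := t) (fun s _ => hd s)
      (hc.intervalIntegrable _ _)
    rw [h0 0 le_rfl, sub_zero] at this
    rw [← this]
    exact intervalIntegral.norm_integral_le_integral_norm ht
  have hb' : ∀ (b' b'' : ℝ → Hm), (∀ s, HasDerivAt b' (b'' s) s) → Continuous b'' → Causal b' →
      ‖b' t‖ ≤ ∫ s in (0:ℝ)..t, ‖b'' s‖ := by
    intro b' b'' hd hc h0
    have := intervalIntegral.integral_eq_sub_of_hasDerivAt (a := 0) (b := t) (fun s _ => hd s)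
      (hc.intervalIntegrable _ _)
    rw [h0 0 le_rfl, sub_zero] at this
    rw [← this]
    exact intervalIntegral.norm_integral_le_integral_norm ht
  have f0 := hb b0' b0'' h0d' h0c h0'
  have f1 := hb' b1' b1'' h1d' h1c h1'
  have n0 : 0 ≤ ∫ s in (0:ℝ)..t, ‖b0 s‖ :=
    intervalIntegral.integral_nonneg ht (fun _ _ => norm_nonneg _)
  have n1 : 0 ≤ ∫ s in (0:ℝ)..t, ‖b1 s‖ :=
    intervalIntegral.integral_nonneg ht (fun _ _ => norm_nonneg _)
  have e1 := hln (b0' t, b1' t)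
  have e2 : ‖g' t‖ ≤ ‖g' t - J (q' t)‖ + ‖J (q' t)‖ := by
    have := norm_add_le (g' t - J (q' t)) (J (q' t))
    simpa using this
  have e3 : ‖J (q' t)‖ ≤ ‖J‖ * D *
      (((∫ s in (0:ℝ)..t, ‖b0 s‖) + ∫ s in (0:ℝ)..t, ‖b0'' s‖) +
      ((∫ s in (0:ℝ)..t, ‖b1 s‖) + ∫ s in (0:ℝ)..t, ‖b1'' s‖)) := by
    refine e1.trans ?_
    gcongr
    · linarith
    · linarith
  have e4 := main.trans hint
  linarith

/-! ### Data regularity -/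

theorem triple_dq {X : Type*} [NormedAddCommGroup X] [NormedSpace ℝ X]
    {f0 f1 f2 f3 : ℝ → X} (h01 : Prim f0 f1) (h12 : Prim f1 f2) (h23 : Prim f2 f3)
    {h h' : ℝ} (hh : 0 < h) (hh' : 0 < h') {t : ℝ} (ht : 0 ≤ t) :
    ∫ s in (0:ℝ)..t, ‖dquot h' (dquot h (dquot h f0)) s‖ ≤ ∫ s in (0:ℝ)..t, ‖f3 s‖ :=
  (((h01.dquot hh.le).dquot hh.le).int_dquot_le hh' ht).trans
    (((h12.dquot hh.le).int_dquot_le hh ht).trans (h23.int_dquot_le hh ht))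

theorem wp_facts {X : Type*} [NormedAddCommGroup X] [NormedSpace ℝ X] [CompleteSpace X]
    {n : ℕ} {β : ℝ → X} (hβ : WP (n + 1) β) :
    (∀ j < n, ∀ t, HasDerivAt (iteratedDeriv j β) (iteratedDeriv (j + 1) β t) t) ∧
    (∀ j ≤ n, Continuous (iteratedDeriv j β)) ∧
    (∀ j ≤ n, Causal (iteratedDeriv j β)) ∧
    (∀ j ≤ n, Prim (iteratedDeriv j β) (iteratedDeriv (j + 1) β)) := by
  obtain ⟨hc, h0, hi, hftc⟩ := hβ
  simp only [Nat.add_sub_cancel] at hc hftc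
  have hd : ∀ j < n, ∀ t, HasDerivAt (iteratedDeriv j β) (iteratedDeriv (j + 1) β t) t := by
    intro j hj t
    rw [iteratedDeriv_succ]
    exact ((hc.differentiable_iteratedDeriv j (by exact_mod_cast hj)) t).hasDerivAt
  have hcont : ∀ j ≤ n, Continuous (iteratedDeriv j β) := by
    intro j hj
    exact hc.continuous_iteratedDeriv j (by exact_mod_cast hj)
  have hcaus : ∀ j ≤ n, Causal (iteratedDeriv j β) := by
    intro j
    induction j with
    | zero => intro _; simpa [iteratedDeriv_zero] using h0
    | succ j ih => intro hj; exact deriv_zero_of_causal (hd j hj) (ih (by omega))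
  refine ⟨hd, hcont, hcaus, ?_⟩
  intro j hj
  rcases hj.lt_or_eq with h | h
  · exact Prim.of_deriv (hd j h) (hcont (j + 1) h) (fun t ht => hcaus (j + 1) h t ht.le)
  · subst h
    refine ⟨fun a b => hi.intervalIntegrable, fun a b => hftc a b, fun t ht => ?_⟩
    rw [iteratedDeriv_succ]
    have : iteratedDeriv j β =ᶠ[𝓝 t] fun _ => 0 := by
      filter_upwards [Iio_mem_nhds ht] with s hs
      exact hcaus j le_rfl s (le_of_lt hs)
    rw [this.deriv_eq]
    simp

theorem iter_add {X : Type*} [NormedAddCommGroup X] [NormedSpace ℝ X] (β : ℝ → X) (i j : ℕ) :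
    iteratedDeriv i (iteratedDeriv j β) = iteratedDeriv (i + j) β := by
  simp only [iteratedDeriv_eq_iterate, Function.iterate_add_apply]

theorem hfun_ge {X : Type*} [NormedAddCommGroup X] [NormedSpace ℝ X] (β : ℝ → X) (n : ℕ)
    (hn : 2 ≤ n) (t : ℝ) (ht : 0 ≤ t) :
    (∫ s in (0:ℝ)..t, ‖iteratedDeriv 3 β s‖) + (∫ s in (0:ℝ)..t, ‖iteratedDeriv 5 β s‖)
      ≤ Hfun n (iteratedDeriv 3 β) t := by
  unfold Hfun
  have h := Finset.sum_le_sum_of_subset_of_nonneg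
    (f := fun j => ∫ τ in (0:ℝ)..t, ‖iteratedDeriv j (iteratedDeriv 3 β) τ‖)
    (s := ({0, 2} : Finset ℕ)) (t := Finset.range (n + 1))
    (by intro x hx; simp at hx ⊢; omega)
    (fun j _ _ => intervalIntegral.integral_nonneg ht (fun _ _ => norm_nonneg _))
  refine le_trans (le_of_eq ?_) h
  rw [Finset.sum_pair (by norm_num), iter_add, iter_add]

/-! ### The abstract estimate -/

theorem second_diff_bound {H M S Hp Hm : Type*} [NormedAddCommGroup H] [NormedSpace ℝ H]
    [CompleteSpace H]
    [NormedAddCommGroup M] [InnerProductSpace ℝ M] [CompleteSpace M]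
    [NormedAddCommGroup S] [InnerProductSpace ℝ S]
    [NormedAddCommGroup Hp] [NormedSpace ℝ Hp] [CompleteSpace Hp]
    [NormedAddCommGroup Hm] [NormedSpace ℝ Hm] [CompleteSpace Hm]
    {J : H →L[ℝ] M} {A : H →L[ℝ] S} {ρ : Hm →L[ℝ] H →L[ℝ] ℝ} {K : Submodule ℝ (Hp × H)}
    (hK : IsClosed {w : H | ((0 : Hp), w) ∈ K})
    (l : (Hp × Hm) →L[ℝ] H) (hl1 : ∀ x, (x.1, l x) ∈ K)
    (hl2 : ∀ x w, ((0 : Hp), w) ∈ K → ⟪J (l x), J w⟫ + ⟪A (l x), A w⟫ = ρ x.2 w)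
    (D : ℝ) (hD0 : 0 ≤ D) (hD : ∀ x, ‖l x‖ ≤ D * ‖x‖)
    {β0 : ℝ → Hp} {β1 : ℝ → Hm} {U : ℝ → H} {g' g'' : ℝ → M}
    (hS : Sol J A ρ K β0 β1 U g' g'') (h0 : WP 6 β0) (h1 : WP 5 β1) (T : ℝ) (hT : 0 ≤ T) :
    ∀ h > 0, ∀ s ≤ T, ‖dquot h (dquot h g'') s‖ ≤
      2 * ‖J‖ * D * (Hfun 3 (iteratedDeriv 3 β0) T + Hfun 2 (iteratedDeriv 3 β1) T) := by
  intro h hh s hs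
  obtain ⟨d0, c0, k0, p0⟩ := wp_facts (n := 5) h0
  obtain ⟨d1, c1, k1, p1⟩ := wp_facts (n := 4) h1
  have g0 := hfun_ge β0 3 (by norm_num) T hT
  have g1 := hfun_ge β1 2 le_rfl T hT
  have nn : ∀ {X : Type _} [NormedAddCommGroup X] (f : ℝ → X),
      0 ≤ ∫ s in (0:ℝ)..T, ‖f s‖ := fun f =>
    intervalIntegral.integral_nonneg hT (fun _ _ => norm_nonneg _)
  have nn' : ∀ (f : ℝ → Hm), 0 ≤ ∫ s in (0:ℝ)..T, ‖f s‖ := fun f =>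
    intervalIntegral.integral_nonneg hT (fun _ _ => norm_nonneg _)
  have hsum : ((∫ s in (0:ℝ)..T, ‖iteratedDeriv 3 β0 s‖) +
        ∫ s in (0:ℝ)..T, ‖iteratedDeriv 5 β0 s‖) +
      ((∫ s in (0:ℝ)..T, ‖iteratedDeriv 3 β1 s‖) + ∫ s in (0:ℝ)..T, ‖iteratedDeriv 5 β1 s‖)
      ≤ Hfun 3 (iteratedDeriv 3 β0) T + Hfun 2 (iteratedDeriv 3 β1) T := by linarith
  have hJD : 0 ≤ 2 * ‖J‖ * D := by positivity
  rcases le_total s 0 with hs0 | hs0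
  · have hc : Causal g'' := deriv_zero_of_causal hS.d2
      (deriv_zero_of_causal hS.d1 (fun t ht => by simp [hS.caus t ht]))
    rw [dq_causal (dq_causal hc hh.le) hh.le s hs0, norm_zero]
    refine mul_nonneg hJD (le_trans ?_ hsum)
    have a1 := nn (iteratedDeriv 3 β0)
    have a2 := nn (iteratedDeriv 5 β0)
    have a3 := nn' (iteratedDeriv 3 β1)
    have a4 := nn' (iteratedDeriv 5 β1)
    linarith
  have hS2 := (hS.dquot hh.le).dquot hh.le
  refine le_of_tendsto (dq_tendsto (hS2.d2 s)).norm ?_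
  filter_upwards [self_mem_nhdsWithin] with h' hh'
  have hh'' : 0 < h' := hh'
  have hS3 := hS2.dquot hh''.le
  have z0 : iteratedDeriv 0 β0 = β0 := iteratedDeriv_zero
  have z1 : iteratedDeriv 0 β1 = β1 := iteratedDeriv_zero
  have e0 := d0 0 (by norm_num)
  have e1 := d1 0 (by norm_num)
  have q0 := k0 0 (by norm_num)
  have q1 := k1 0 (by norm_num)
  rw [z0] at e0 q0
  rw [z1] at e1 q1
  have dd : ∀ {X : Type _} [NormedAddCommGroup X] [NormedSpace ℝ X] {f f' : ℝ → X},
      (∀ t, HasDerivAt f (f' t) t) → ∀ t, HasDerivAt (dquot h' (dquot h (dquot h f)))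
        (dquot h' (dquot h (dquot h f')) t) t := fun hf =>
    dq_hasDerivAt (dq_hasDerivAt (dq_hasDerivAt hf h) h) h'
  have dd' : ∀ {f f' : ℝ → Hm},
      (∀ t, HasDerivAt f (f' t) t) → ∀ t, HasDerivAt (dquot h' (dquot h (dquot h f)))
        (dquot h' (dquot h (dquot h f')) t) t := fun hf =>
    dq_hasDerivAt (dq_hasDerivAt (dq_hasDerivAt hf h) h) h'
  have main := sol_bound hK l hl1 hl2 D hD0 hD hS3
    (dq_causal (dq_causal (dq_causal q0 hh.le) hh.le) hh''.le)
    (dq_causal (dq_causal (dq_causal q1 hh.le) hh.le) hh''.le)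
    (dd e0) (dd (d0 1 (by norm_num))) (dd' e1) (dd' (d1 1 (by norm_num)))
    (dq_continuous (dq_continuous (dq_continuous (c0 2 (by norm_num)) h) h) h')
    (dq_continuous (dq_continuous (dq_continuous (c1 2 (by norm_num)) h) h) h') s hs0
  refine main.trans (mul_le_mul_of_nonneg_left (le_trans ?_ hsum) hJD)
  have mono0 : ∀ f : ℝ → Hp, IntervalIntegrable f volume 0 T →
      ∫ r in (0:ℝ)..s, ‖f r‖ ≤ ∫ r in (0:ℝ)..T, ‖f r‖ := fun f hf =>
    intervalIntegral.integral_mono_interval le_rfl hs0 hs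
      (Eventually.of_forall fun _ => norm_nonneg _) hf.norm
  have mono1 : ∀ f : ℝ → Hm, IntervalIntegrable f volume 0 T →
      ∫ r in (0:ℝ)..s, ‖f r‖ ≤ ∫ r in (0:ℝ)..T, ‖f r‖ := fun f hf =>
    intervalIntegral.integral_mono_interval le_rfl hs0 hs
      (Eventually.of_forall fun _ => norm_nonneg _) hf.norm
  have t0 := triple_dq (p0 0 (by norm_num)) (p0 1 (by norm_num)) (p0 2 (by norm_num)) hh hh'' hs0
  have t1 := triple_dq (p1 0 (by norm_num)) (p1 1 (by norm_num)) (p1 2 (by norm_num)) hh hh'' hs0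
  have t2 := triple_dq (p0 2 (by norm_num)) (p0 3 (by norm_num)) (p0 4 (by norm_num)) hh hh'' hs0
  have t3 := triple_dq (p1 2 (by norm_num)) (p1 3 (by norm_num)) (p1 4 (by norm_num)) hh hh'' hs0
  rw [z0] at t0
  rw [z1] at t1
  have m0 := mono0 _ ((p0 2 (by norm_num)).1 0 T)
  have m1 := mono1 _ ((p1 2 (by norm_num)).1 0 T)
  have m2 := mono0 _ ((p0 4 (by norm_num)).1 0 T)
  have m3 := mono1 _ ((p1 4 (by norm_num)).1 0 T)
  exact add_le_add (add_le_add (t0.trans m0) (t2.trans m2)) (add_le_add (t1.trans m1) (t3.trans m3))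

theorem abs_main {H M S Hp Hm : Type*} [NormedAddCommGroup H] [NormedSpace ℝ H]
    [CompleteSpace H]
    [NormedAddCommGroup M] [InnerProductSpace ℝ M] [CompleteSpace M]
    [NormedAddCommGroup S] [InnerProductSpace ℝ S] [CompleteSpace S]
    [NormedAddCommGroup Hp] [NormedSpace ℝ Hp] [CompleteSpace Hp]
    [NormedAddCommGroup Hm] [NormedSpace ℝ Hm] [CompleteSpace Hm]
    (J : H →L[ℝ] M) (A : H →L[ℝ] S) (ρ : Hm →L[ℝ] H →L[ℝ] ℝ) (c L : ℝ) (hc : 0 < c) (hL : 0 ≤ L)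
    (hco : ∀ v, c * ‖v‖ ^ 2 ≤ ‖J v‖ ^ 2 + ‖A v‖ ^ 2) :
    ∃ C : ℝ, 0 ≤ C ∧ ∀ (K : Submodule ℝ (Hp × H)), IsClosed {w : H | ((0 : Hp), w) ∈ K} →
      (∀ a, ∃ p, (a, p) ∈ K ∧ ‖p‖ ≤ L * ‖a‖) →
      ∀ (k : ℝ), 0 < k → ∀ (β0 : ℝ → Hp) (β1 : ℝ → Hm), WP 6 β0 → WP 5 β1 →
      ∀ (U : ℝ → H) (g' g'' : ℝ → M), Sol J A ρ K β0 β1 U g' g'' →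
      ∀ (Uk : ℝ → H), Causal Uk → (∀ t, (β0 t, Uk t) ∈ K) →
        (∀ t w, ((0 : Hp), w) ∈ K → ⟪J (dquot k (dquot k Uk) t), J w⟫
          + ⟪A (amean k (amean k Uk) t), A w⟫ = ρ (amean k (amean k β1) t) w) →
      ∀ t, 0 ≤ t → dEn J A k (fun τ => U τ - Uk τ) t ≤
        C * k ^ 2 * t * (Hfun 3 (iteratedDeriv 3 β0) t + Hfun 2 (iteratedDeriv 3 β1) t) := by
  set D : ℝ := L + c⁻¹ * (‖ρ‖ + (‖J‖ ^ 2 + ‖A‖ ^ 2) * L) with hD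
  have hD0 : 0 ≤ D := by positivity
  refine ⟨4 * ‖J‖ * D, by positivity, ?_⟩
  intro K hK hl k hk β0 β1 h0 h1 U g' g'' hS Uk hUk0 hUkm hUkw t ht
  obtain ⟨l, hl1, hl2, hl3⟩ := lift_exists J A ρ c L hc hL hco K hK hl
  have hsd := second_diff_bound hK l hl1 hl2 D hD0 hl3 hS h0 h1 t ht
  set B := 2 * ‖J‖ * D * (Hfun 3 (iteratedDeriv 3 β0) t + Hfun 2 (iteratedDeriv 3 β1) t) with hB
  have hJU0 : Causal (fun τ => J (U τ)) := fun t ht => by simp [hS.caus t ht]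
  have r1 := resid_bound hS.d1 hS.d2 hk hsd
  have r0 := resid_bound0 hS.d1 hS.d2 hJU0 hk hsd
  obtain ⟨n, hn⟩ := exists_nat_ge (t / k)
  have := disc_energy J A (K.comap (LinearMap.inr ℝ Hp H)) k hk (fun τ => U τ - Uk τ)
    (by
      intro s
      have := K.sub_mem (hS.mem s) (hUkm s)
      simpa using this)
    (fun s hs => by simp [hS.caus s hs, hUk0 s hs])
    (fun s => dquot k (dquot k (fun τ => J (U τ))) s - amean k (amean k g'') s)
    (by
      intro s w hw
      have hw' : ((0 : Hp), w) ∈ K := hw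
      have e0 := hUkw s w hw'
      have e1 := hS.weak s w hw'
      have e2 := hS.weak (s - k) w hw'
      have e3 := hS.weak (s - k - k) w hw'
      simp only [dquot, amean, map_smul, map_sub, map_add, real_inner_smul_left, inner_sub_left,
        inner_add_left, _root_.add_apply, _root_.smul_apply, smul_eq_mul] at *
      linear_combination 4⁻¹ * e1 + 2⁻¹ * e2 + 4⁻¹ * e3 - e0)
    (2 * B) t r1 r0 n t le_rfl ht ((div_le_iff₀ hk).1 hn)
  refine this.trans (le_of_eq ?_)
  rw [hB]; ring

set_option maxHeartbeats 1600000 in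
/-- Fully discrete energy-norm estimate (Theorem 4.2, estimate (4.5)) for trapezoidal-rule time
discretization of the semidiscrete problem (2.10). -/
theorem fully_discrete_energy_estimate
    {L2Ω L2Ωv L2s L2sv Hp Hm H1Ω H1s Hdiv : Type*}
    [NormedAddCommGroup L2Ω] [InnerProductSpace ℝ L2Ω] [CompleteSpace L2Ω]
    [NormedAddCommGroup L2Ωv] [InnerProductSpace ℝ L2Ωv] [CompleteSpace L2Ωv]
    [NormedAddCommGroup L2s] [InnerProductSpace ℝ L2s] [CompleteSpace L2s]
    [NormedAddCommGroup L2sv] [InnerProductSpace ℝ L2sv] [CompleteSpace L2sv]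
    [NormedAddCommGroup Hp] [InnerProductSpace ℝ Hp] [CompleteSpace Hp]
    [NormedAddCommGroup Hm] [InnerProductSpace ℝ Hm] [CompleteSpace Hm]
    [NormedAddCommGroup H1Ω] [NormedSpace ℝ H1Ω] [CompleteSpace H1Ω]
    [NormedAddCommGroup H1s] [NormedSpace ℝ H1s] [CompleteSpace H1s]
    [NormedAddCommGroup Hdiv] [NormedSpace ℝ Hdiv] [CompleteSpace Hdiv]
    (ι : H1Ω →L[ℝ] L2Ω) (grad : H1Ω →L[ℝ] L2Ωv) (γ : H1Ω →L[ℝ] Hp)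
    (ιs : H1s →L[ℝ] L2s) (grads : H1s →L[ℝ] L2sv) (γm γp : H1s →L[ℝ] Hp)
    (ιdiv : Hdiv →L[ℝ] L2sv) (divs : Hdiv →L[ℝ] L2s) (γνm γνp : Hdiv →L[ℝ] Hm)
    (dpair : Hm →L[ℝ] Hp →L[ℝ] ℝ)
    (cinv cinv2 : L2Ω →L[ℝ] L2Ω) (kap khalf : L2Ωv →L[ℝ] L2Ωv)
    (hGreen : ∀ (v : Hdiv) (w : H1s),
      ⟪divs v, ιs w⟫ + ⟪ιdiv v, grads w⟫
        = dpair (γνm v) (γm w) - dpair (γνp v) (γp w))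
    (htrace_surj : ∀ a b : Hp, ∃ w : H1s, γm w = a ∧ γp w = b)
    (hH1Ωnorm : ∀ u : H1Ω, ‖u‖ ^ 2 = ‖ι u‖ ^ 2 + ‖grad u‖ ^ 2)
    (hH1snorm : ∀ u : H1s, ‖u‖ ^ 2 = ‖ιs u‖ ^ 2 + ‖grads u‖ ^ 2)
    (hHdivnorm : ∀ v : Hdiv, ‖v‖ ^ 2 = ‖ιdiv v‖ ^ 2 + ‖divs v‖ ^ 2)
    (hcinv : ∀ x y : L2Ω, ⟪cinv2 x, y⟫ = ⟪cinv x, cinv y⟫)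
    (hκhalf : ∀ x y : L2Ωv, ⟪kap x, y⟫ = ⟪khalf x, khalf y⟫)
    (c0 κ0 : ℝ) (hc0 : 0 < c0) (hκ0 : 0 < κ0)
    (hc2pos : ∀ x : L2Ω, c0 * ‖x‖ ^ 2 ≤ ⟪cinv2 x, x⟫)
    (hκpos : ∀ x : L2Ωv, κ0 * ‖x‖ ^ 2 ≤ ⟪kap x, x⟫) :
    ∃ C : ℝ, 0 < C ∧
      ∀ (Uh : Submodule ℝ H1Ω) (Xh : Submodule ℝ Hm) (Yh : Submodule ℝ Hp),
        FiniteDimensional ℝ Uh → FiniteDimensional ℝ Xh → FiniteDimensional ℝ Yh →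
        ∀ k : ℝ, 0 < k →
        ∀ (β0 : ℝ → Hp) (β1 : ℝ → Hm), WP 6 β0 → WP 5 β1 →
        ∀ (uh : ℝ → H1Ω) (us : ℝ → H1s) (wst : ℝ → Hdiv),
          Solves210 ι grad γ ιs grads γm γp ιdiv divs γνm γνp dpair cinv2 kap
            Uh Xh Yh β0 β1 uh us wst →
        ∀ (ukh : ℝ → H1Ω) (uks : ℝ → H1s) (wkst : ℝ → Hdiv),
          Solves43 ι grad γ ιs grads γm γp ιdiv divs γνm γνp dpair cinv2 kap
            Uh Xh Yh k β0 β1 ukh uks wkst →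
        ∀ t : ℝ, 0 ≤ t →
          ‖dquot k (fun τ => ι (uh τ) - ι (ukh τ)) t‖
            + ‖kap (grad (amean k (fun τ => uh τ - ukh τ) t))‖
            + ‖dquot k (fun τ => ιs (us τ) - ιs (uks τ)) t‖
            + ‖grads (amean k (fun τ => us τ - uks τ) t)‖
          ≤ C * k ^ 2 * t * (Hfun 3 (iteratedDeriv 3 β0) t + Hfun 2 (iteratedDeriv 3 β1) t) := by
  classical
  set TM : (L2Ω × L2s) →L[ℝ] WithLp 2 (L2Ω × L2s) :=
    ((WithLp.prodContinuousLinearEquiv 2 ℝ L2Ω L2s).symm :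
      (L2Ω × L2s) →L[ℝ] WithLp 2 (L2Ω × L2s)).comp
      (cinv.prodMap (ContinuousLinearMap.id ℝ L2s)) with hTM
  set TS : (L2Ωv × L2sv) →L[ℝ] WithLp 2 (L2Ωv × L2sv) :=
    ((WithLp.prodContinuousLinearEquiv 2 ℝ L2Ωv L2sv).symm :
      (L2Ωv × L2sv) →L[ℝ] WithLp 2 (L2Ωv × L2sv)).comp
      (khalf.prodMap (ContinuousLinearMap.id ℝ L2sv)) with hTS
  have hTMi : ∀ x y, ⟪TM x, TM y⟫ = ⟪cinv2 x.1, y.1⟫ + ⟪x.2, y.2⟫ := by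
    intro x y
    rw [hcinv, WithLp.prod_inner_apply]
    rfl
  have hTSi : ∀ x y, ⟪TS x, TS y⟫ = ⟪kap x.1, y.1⟫ + ⟪x.2, y.2⟫ := by
    intro x y
    rw [hκhalf, WithLp.prod_inner_apply]
    rfl
  set J : (H1Ω × H1s) →L[ℝ] WithLp 2 (L2Ω × L2s) := TM.comp (ι.prodMap ιs) with hJ
  set A : (H1Ω × H1s) →L[ℝ] WithLp 2 (L2Ωv × L2sv) := TS.comp (grad.prodMap grads) with hA
  have hJi : ∀ x w, ⟪TM x, J w⟫ = ⟪cinv2 x.1, ι w.1⟫ + ⟪x.2, ιs w.2⟫ := fun x w => hTMi x _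
  have hJe : ∀ w, J w = TM (ι w.1, ιs w.2) := fun w => rfl
  have hAi : ∀ p w, ⟪A p, A w⟫ = ⟪kap (grad p.1), grad w.1⟫ + ⟪grads p.2, grads w.2⟫ :=
    fun p w => hTSi _ _
  have hJn : ∀ p, c0 * ‖ι p.1‖ ^ 2 + ‖ιs p.2‖ ^ 2 ≤ ‖J p‖ ^ 2 := by
    intro p
    rw [← real_inner_self_eq_norm_sq (J p), hJe p, hTMi, real_inner_self_eq_norm_sq]
    have := hc2pos (ι p.1)
    simp only
    linarith
  have hAn : ∀ p, κ0 * ‖grad p.1‖ ^ 2 + ‖grads p.2‖ ^ 2 ≤ ‖A p‖ ^ 2 := by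
    intro p
    rw [← real_inner_self_eq_norm_sq (A p), hAi, real_inner_self_eq_norm_sq]
    have := hκpos (grad p.1)
    linarith
  set ρ : Hm →L[ℝ] (H1Ω × H1s) →L[ℝ] ℝ :=
    dpair.bilinearComp (ContinuousLinearMap.id ℝ Hm) (γ.comp (ContinuousLinearMap.fst ℝ H1Ω H1s))
    with hρ
  have hρa : ∀ b w, ρ b w = dpair b (γ w.1) := fun b w => rfl
  set c : ℝ := min (min c0 κ0) 1 with hcdef
  have hc : 0 < c := lt_min (lt_min hc0 hκ0) one_pos
  have hcc0 : c ≤ c0 := (min_le_left _ _).trans (min_le_left _ _)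
  have hcκ : c ≤ κ0 := (min_le_left _ _).trans (min_le_right _ _)
  have hc1 : c ≤ 1 := min_le_right _ _
  have hco : ∀ p, c * ‖p‖ ^ 2 ≤ ‖J p‖ ^ 2 + ‖A p‖ ^ 2 := by
    intro p
    have e1 : ‖p‖ ^ 2 ≤ ‖p.1‖ ^ 2 + ‖p.2‖ ^ 2 := by
      rw [Prod.norm_def]
      rcases max_choice ‖p.1‖ ‖p.2‖ with h | h <;> rw [h] <;>
        nlinarith [sq_nonneg ‖p.1‖, sq_nonneg ‖p.2‖]
    rw [hH1Ωnorm, hH1snorm] at e1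
    have e2 := mul_le_mul_of_nonneg_left e1 hc.le
    have e3 := hJn p
    have e4 := hAn p
    have e5 := mul_le_mul_of_nonneg_right hcc0 (sq_nonneg ‖ι p.1‖)
    have e6 := mul_le_mul_of_nonneg_right hcκ (sq_nonneg ‖grad p.1‖)
    have e7 := mul_le_mul_of_nonneg_right hc1 (sq_nonneg ‖ιs p.2‖)
    have e8 := mul_le_mul_of_nonneg_right hc1 (sq_nonneg ‖grads p.2‖)
    linarith
  obtain ⟨L, hL, hlift⟩ := (γm.prod γp).exists_preimage_norm_le (by
    rintro ⟨a, b⟩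
    obtain ⟨w, h1, h2⟩ := htrace_surj a b
    exact ⟨w, by simp [h1, h2]⟩)
  obtain ⟨C, hC0, hC⟩ := abs_main (Hp := Hp) J A ρ c L hc hL.le hco
  set Q : ℝ := (Real.sqrt c0)⁻¹ + ‖kap‖ * (Real.sqrt κ0)⁻¹ + 1 + 1 with hQ
  have hQ0 : 0 < Q := by positivity
  refine ⟨Q * (C + 1), by positivity, ?_⟩
  intro Uh Xh Yh hUf hXf hYf k hk β0 β1 hβ0 hβ1 uh us wst hsol ukh uks wkst hsolk t ht
  obtain ⟨s1, s2, s3, s4, s5, s6, s7, s8, s9, s10, s11, s12, s13, s14, s15⟩ := hsol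
  obtain ⟨k1, k2, k3, k4, k5, k6, k7, k8, k9, k10, k11⟩ := hsolk
  let K : Submodule ℝ (Hp × (H1Ω × H1s)) :=
    { carrier := {x | x.2.1 ∈ Uh ∧ γm x.2.2 - γp x.2.2 ∈ Yh ∧
        ∀ μ ∈ Xh, dpair μ (γ x.2.1 - γp x.2.2 - x.1) = 0}
      zero_mem' := by simp
      add_mem' := by
        rintro x y ⟨x1, x2, x3⟩ ⟨y1, y2, y3⟩
        refine ⟨Uh.add_mem x1 y1, ?_, ?_⟩
        · have := Yh.add_mem x2 y2
          simp only [Prod.snd_add, map_add]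
          convert this using 1
          abel
        · intro μ hμ
          have a := x3 μ hμ
          have b := y3 μ hμ
          simp only [Prod.snd_add, Prod.fst_add, map_add, map_sub] at *
          linarith
      smul_mem' := by
        rintro r x ⟨x1, x2, x3⟩
        refine ⟨Uh.smul_mem r x1, ?_, ?_⟩
        · have := Yh.smul_mem r x2
          simp only [Prod.smul_snd, map_smul]
          rwa [smul_sub] at this
        · intro μ hμ
          have a := x3 μ hμ
          simp only [Prod.smul_snd, Prod.smul_fst, map_smul, map_sub, smul_eq_mul] at *
          linear_combination r * a }
  have hKm : ∀ a p, (a, p) ∈ K ↔ (p.1 ∈ Uh ∧ γm p.2 - γp p.2 ∈ Yh ∧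
        ∀ μ ∈ Xh, dpair μ (γ p.1 - γp p.2 - a) = 0) := fun a p => Iff.rfl
  have hKcl : IsClosed {w : H1Ω × H1s | ((0 : Hp), w) ∈ K} := by
    have hU : IsClosed (Uh : Set H1Ω) := Uh.closed_of_finiteDimensional
    have hY : IsClosed (Yh : Set Hp) := Yh.closed_of_finiteDimensional
    have c1 : IsClosed {w : H1Ω × H1s | w.1 ∈ Uh} := hU.preimage continuous_fst
    have c2 : IsClosed {w : H1Ω × H1s | γm w.2 - γp w.2 ∈ Yh} :=
      hY.preimage (by fun_prop : Continuous fun w : H1Ω × H1s => γm w.2 - γp w.2)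
    have c3 : IsClosed {w : H1Ω × H1s | ∀ μ ∈ Xh, dpair μ (γ w.1 - γp w.2 - 0) = 0} := by
      simp only [Set.ofPred_forall]
      refine isClosed_iInter fun μ => isClosed_iInter fun _ => ?_
      exact isClosed_eq (by fun_prop) continuous_const
    exact c1.inter (c2.inter c3)
  have hKl : ∀ a, ∃ p, (a, p) ∈ K ∧ ‖p‖ ≤ L * ‖a‖ := by
    intro a
    obtain ⟨w, hw, hwn⟩ := hlift (-a, -a)
    have w1 : γm w = -a := congrArg Prod.fst hw
    have w2 : γp w = -a := congrArg Prod.snd hw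
    refine ⟨(0, w), (hKm _ _).2 ⟨Uh.zero_mem, ?_, ?_⟩, ?_⟩
    · simp [w1, w2]
    · intro μ _
      simp [w2]
    · rw [Prod.norm_def] at hwn ⊢
      simpa using hwn
  have hgreen : ∀ (v : Hdiv) (w : H1Ω × H1s), ((0 : Hp), w) ∈ K → γνm v - γνp v ∈ Xh →
      (∀ ψ ∈ Yh, dpair (γνm v) ψ = 0) →
      ⟪divs v, ιs w.2⟫ + ⟪ιdiv v, grads w.2⟫ = dpair (γνm v - γνp v) (γ w.1) := by
    intro v w hw hX hY
    obtain ⟨_, w2, w3⟩ := (hKm _ _).1 hw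
    rw [hGreen]
    have a := w3 _ hX
    have b := hY _ w2
    simp only [map_sub, _root_.sub_apply, sub_zero] at *
    linarith
  have hd1 : ∀ {X : Type _} [NormedAddCommGroup X] [NormedSpace ℝ X] (f : ℝ → X),
      ContDiff ℝ 2 f → (∀ t, HasDerivAt f (deriv f t) t) ∧
        ∀ t, HasDerivAt (deriv f) (iteratedDeriv 2 f t) t := by
    intro X _ _ f hf
    refine ⟨fun t => (hf.differentiable (by norm_num) t).hasDerivAt, fun t => ?_⟩
    have := hf.differentiable_iteratedDeriv 1 (by norm_num)
    rw [iteratedDeriv_succ, ← iteratedDeriv_one]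
    exact (this t).hasDerivAt
  have hd2 : ∀ (f : ℝ → L2s),
      ContDiff ℝ 2 f → (∀ t, HasDerivAt f (deriv f t) t) ∧
        ∀ t, HasDerivAt (deriv f) (iteratedDeriv 2 f t) t := by
    intro f hf
    refine ⟨fun t => (hf.differentiable (by norm_num) t).hasDerivAt, fun t => ?_⟩
    have := hf.differentiable_iteratedDeriv 1 (by norm_num)
    rw [iteratedDeriv_succ, ← iteratedDeriv_one]
    exact (this t).hasDerivAt
  obtain ⟨da, da'⟩ := hd1 _ s5
  obtain ⟨db, db'⟩ := hd2 _ s6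
  have hSol : Sol J A ρ K β0 β1 (fun τ => (uh τ, us τ))
      (fun τ => TM (deriv (fun τ => ι (uh τ)) τ, deriv (fun τ => ιs (us τ)) τ))
      (fun τ => TM (iteratedDeriv 2 (fun τ => ι (uh τ)) τ,
        iteratedDeriv 2 (fun τ => ιs (us τ)) τ)) :=
    { mem := fun τ => (hKm _ _).2 ⟨s1 τ, s12 τ, s15 τ⟩
      cont := s7.prodMk s8
      caus := fun τ hτ => by simp [s2 τ hτ, s3 τ hτ]
      d1 := fun τ => TM.hasFDerivAt.comp_hasDerivAt τ ((da τ).prodMk (db τ))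
      d2 := fun τ => TM.hasFDerivAt.comp_hasDerivAt τ ((da' τ).prodMk (db' τ))
      weak := by
        intro τ w hw
        have e1 := s10 τ w.1 ((hKm _ _).1 hw).1
        have e2 := hgreen (wst τ) w hw (s13 τ) (s14 τ)
        rw [hJi, hAi, hρa]
        simp only
        rw [s11 τ, ← s9 τ]
        linarith }
  have hgk : ∀ τ w, ((0 : Hp), w) ∈ K →
      ⟪J (dquot k (dquot k (fun τ => (ukh τ, uks τ))) τ), J w⟫
        + ⟪A (amean k (amean k (fun τ => (ukh τ, uks τ))) τ), A w⟫
        = ρ (amean k (amean k β1) τ) w := by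
    intro τ w hw
    have e1 := k6 τ w.1 ((hKm _ _).1 hw).1
    have e2 := k7 τ
    have g1 := hgreen (wkst τ) w hw (k9 τ) (k10 τ)
    have g2 := hgreen (wkst (τ - k)) w hw (k9 _) (k10 _)
    have g3 := hgreen (wkst (τ - k - k)) w hw (k9 _) (k10 _)
    rw [k5] at g1 g2 g3
    have q1 : dquot k (dquot k (fun τ => (ukh τ, uks τ))) τ
        = (dquot k (dquot k ukh) τ, dquot k (dquot k uks) τ) := rfl
    have q2 : amean k (amean k (fun τ => (ukh τ, uks τ))) τ
        = (amean k (amean k ukh) τ, amean k (amean k uks) τ) := rfl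
    have q3 : ι (dquot k (dquot k ukh) τ) = dquot k (dquot k (fun τ => ι (ukh τ))) τ := by
      simp [dquot]
    have q4 : ιs (dquot k (dquot k uks) τ) = dquot k (dquot k (fun τ => ιs (uks τ))) τ := by
      simp [dquot]
    rw [hJe (dquot k (dquot k (fun τ => (ukh τ, uks τ))) τ), hJi, hAi, hρa, q1, q2]
    simp only
    rw [q3, q4, e2, ← e1]
    simp only [amean, map_smul, map_sub, map_add, real_inner_smul_left, 
      inner_add_left, _root_.add_apply, _root_.smul_apply, _root_.sub_apply,
      smul_eq_mul] at g1 g2 g3 ⊢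
    linear_combination 4⁻¹ * g1 + 2⁻¹ * g2 + 4⁻¹ * g3
  have main := hC K hKcl hKl k hk β0 β1 hβ0 hβ1 _ _ _ hSol (fun τ => (ukh τ, uks τ))
    (fun τ hτ => by simp [k2 τ hτ, k3 τ hτ]) (fun τ => (hKm _ _).2 ⟨k1 τ, k8 τ, k11 τ⟩) hgk t ht
  set E : ℝ → H1Ω × H1s := fun τ => (uh τ, us τ) - (ukh τ, uks τ) with hE
  set N := dEn J A k E t with hN
  set B := Hfun 3 (iteratedDeriv 3 β0) t + Hfun 2 (iteratedDeriv 3 β1) t with hB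
  have hN0 : 0 ≤ N := Real.sqrt_nonneg _
  have hN2 : N ^ 2 = ‖J (dquot k E t)‖ ^ 2 + ‖A (amean k E t)‖ ^ 2 := Real.sq_sqrt (by positivity)
  have hB0 : 0 ≤ B := by
    refine add_nonneg ?_ ?_
    · exact Finset.sum_nonneg fun j _ =>
        intervalIntegral.integral_nonneg ht (fun _ _ => norm_nonneg _)
    · exact Finset.sum_nonneg fun j _ =>
        intervalIntegral.integral_nonneg ht (fun _ _ => norm_nonneg _)
  have hj := hJn (dquot k E t)
  have ha := hAn (amean k E t)
  have r1 : dquot k (fun τ => ι (uh τ) - ι (ukh τ)) t = ι (dquot k E t).1 := by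
    simp [dquot, hE]
  have r2 : amean k (fun τ => uh τ - ukh τ) t = (amean k E t).1 := rfl
  have r3 : dquot k (fun τ => ιs (us τ) - ιs (uks τ)) t = ιs (dquot k E t).2 := by
    simp [dquot, hE]
  have r4 : amean k (fun τ => us τ - uks τ) t = (amean k E t).2 := rfl
  rw [r1, r2, r3, r4]
  have hsc : 0 < Real.sqrt c0 := Real.sqrt_pos.2 hc0
  have hsκ : 0 < Real.sqrt κ0 := Real.sqrt_pos.2 hκ0
  have p1 : 0 ≤ c0 * ‖ι (dquot k E t).1‖ ^ 2 := by positivity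
  have p2 : 0 ≤ κ0 * ‖grad (amean k E t).1‖ ^ 2 := by positivity
  have p3 : 0 ≤ ‖ιs (dquot k E t).2‖ ^ 2 := by positivity
  have p4 : 0 ≤ ‖grads (amean k E t).2‖ ^ 2 := by positivity
  have b1 : ‖ι (dquot k E t).1‖ ≤ (Real.sqrt c0)⁻¹ * N := by
    rw [le_inv_mul_iff₀ hsc]
    apply abs_le_of_sq_le_sq' _ hN0 |>.2
    rw [mul_pow, Real.sq_sqrt hc0.le]
    nlinarith [sq_nonneg ‖A (amean k E t)‖]
  have b2 : ‖grad (amean k E t).1‖ ≤ (Real.sqrt κ0)⁻¹ * N := by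
    rw [le_inv_mul_iff₀ hsκ]
    apply abs_le_of_sq_le_sq' _ hN0 |>.2
    rw [mul_pow, Real.sq_sqrt hκ0.le]
    nlinarith [sq_nonneg ‖J (dquot k E t)‖]
  have b2' : ‖kap (grad (amean k E t).1)‖ ≤ ‖kap‖ * (Real.sqrt κ0)⁻¹ * N := by
    refine (kap.le_opNorm _).trans ?_
    rw [mul_assoc]
    gcongr
  have b3 : ‖ιs (dquot k E t).2‖ ≤ N := by
    apply abs_le_of_sq_le_sq' _ hN0 |>.2
    nlinarith [sq_nonneg ‖A (amean k E t)‖]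
  have b4 : ‖grads (amean k E t).2‖ ≤ N := by
    apply abs_le_of_sq_le_sq' _ hN0 |>.2
    nlinarith [sq_nonneg ‖J (dquot k E t)‖]
  calc _ ≤ Q * N := by rw [hQ]; linarith
    _ ≤ Q * (C * k ^ 2 * t * B) := by
        gcongr
    _ ≤ Q * ((C + 1) * k ^ 2 * t * B) := by
        gcongr
        linarith
    _ = _ := by ring
end
end
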